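/- arXiv:1611.06778 — 12 statements merged into one kernel-verified Lean document; each statement's English description precedes it below -/
import Mathlib

section
/- Let I ⊆ ℝ be an open interval, s : I → ℝ a strictly increasing continuous function, and μ its Stieltjes measure. Let μ = g·λ + κ be the Lebesgue decomposition of μ with respect to Lebesgue measure λ on I, where g ≥ 0 is locally integrable and κ ⊥ λ. If λ is absolutely continuous with respect to μ, then g(x) > 0 for λ-almost every x ∈ I; consequently, for any fixed e ∈ I, the function s̄(x) := ∫_e^x g(u) du is strictly increasing and continuous on I. -/
open MeasureTheory Set
open scoped ENNReal Topology

/-!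
The singular part `κ` lives on a `λ`-null set, so it cannot help to dominate `λ`: from
`λ ≪ g·λ + κ` one gets `λ ≪ g·λ`. The set `{g = 0}` is null for `g·λ`, hence for `λ`.
-/

theorem ae_ne_zero_of_absolutelyContinuous_withDensity_add {α : Type*} [MeasurableSpace α]
    {ν κ : Measure α} {f : α → ℝ≥0∞} (hf : AEMeasurable f ν) (hsing : κ.MutuallySingular ν)
    (habs : ν ≪ ν.withDensity f + κ) : ∀ᵐ x ∂ν, f x ≠ 0 := by
  have hν : ν ≪ ν.withDensity f :=
    Measure.absolutelyContinuous_of_add_of_mutuallySingular habs hsing.symm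
  exact hν.ae_le ((ae_withDensity_iff' hf).mpr (ae_of_all ν fun _ hx => hx))

theorem integral_pos_of_ae_pos {α : Type*} [MeasurableSpace α] {ν : Measure α} {f : α → ℝ}
    (hν : ν ≠ 0) (hf : Integrable f ν) (hpos : ∀ᵐ x ∂ν, 0 < f x) : 0 < ∫ x, f x ∂ν := by
  have hsupp : Function.support f =ᵐ[ν] univ :=
    Filter.eventuallyEq_univ.mpr (hpos.mono fun _ hx => hx.ne')
  rw [integral_pos_iff_support_of_nonneg_ae (hpos.mono fun _ hx => hx.le) hf,
    measure_congr hsupp]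
  exact Measure.measure_univ_pos.mpr hν

section NhdsWithin

variable {α : Type*} [TopologicalSpace α] [LinearOrder α] {s : Set α} {x : α}

theorem exists_Ici_mem_nhdsWithin [ClosedIicTopology α] (hx : x ∈ s) :
    ∃ a ∈ s, Ici a ∈ 𝓝[s] x := by
  by_cases h : ∃ a ∈ s, a < x
  · obtain ⟨a, ha, hax⟩ := h
    exact ⟨a, ha, mem_nhdsWithin_of_mem_nhds (Ici_mem_nhds hax)⟩
  · push Not at h
    exact ⟨x, hx, Filter.mem_of_superset self_mem_nhdsWithin h⟩

theorem exists_Icc_mem_nhdsWithin [OrderClosedTopology α] (hx : x ∈ s) :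
    ∃ a ∈ s, ∃ b ∈ s, Icc a b ∈ 𝓝[s] x := by
  obtain ⟨a, ha, hax⟩ := exists_Ici_mem_nhdsWithin hx
  obtain ⟨b, hb, hxb⟩ : ∃ b ∈ s, Iic b ∈ 𝓝[s] x :=
    exists_Ici_mem_nhdsWithin (α := αᵒᵈ) hx
  exact ⟨a, ha, b, hb, Filter.inter_mem hax hxb⟩

end NhdsWithin

section Primitive

variable {I : Set ℝ} {ν : Measure ℝ} {E : Type*} [NormedAddCommGroup E] {e : ℝ}

theorem intervalIntegrable_of_locallyIntegrableOn {f : ℝ → E} (hI : I.OrdConnected)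
    (hf : LocallyIntegrableOn f I ν) {a b : ℝ} (ha : a ∈ I) (hb : b ∈ I) :
    IntervalIntegrable f ν a b :=
  (hf.integrableOn_compact_subset (hI.uIcc_subset ha hb) isCompact_uIcc).intervalIntegrable

theorem continuousOn_primitive_of_locallyIntegrableOn [NormedSpace ℝ E] [NullSingletonClass ν]
    {f : ℝ → E} (hI : I.OrdConnected) (hf : LocallyIntegrableOn f I ν) (he : e ∈ I) :
    ContinuousOn (fun x => ∫ u in e..x, f u ∂ν) I := by
  intro x hx
  obtain ⟨a, ha, b, hb, hab⟩ := exists_Icc_mem_nhdsWithin hx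
  have hint : IntervalIntegrable f ν (min e a) (max e b) :=
    intervalIntegrable_of_locallyIntegrableOn hI hf (min_rec' (· ∈ I) he ha)
      (max_rec' (· ∈ I) he hb)
  exact (intervalIntegral.continuousWithinAt_primitive (measure_singleton x)
    hint).mono_of_mem_nhdsWithin hab

theorem strictMonoOn_primitive_of_ae_pos [ν.IsOpenPosMeasure] {f : ℝ → ℝ} (hI : I.OrdConnected)
    (hf : LocallyIntegrableOn f I ν) (hpos : ∀ᵐ x ∂(ν.restrict I), 0 < f x) (he : e ∈ I) :
    StrictMonoOn (fun x => ∫ u in e..x, f u ∂ν) I := by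
  intro x hx y hy hxy
  have hxyI : Ioc x y ⊆ I := Ioc_subset_Icc_self.trans (hI.out hx hy)
  have hint : IntervalIntegrable f ν x y := intervalIntegrable_of_locallyIntegrableOn hI hf hx hy
  have hν : ν.restrict (Ioc x y) ≠ 0 :=
    Measure.restrict_eq_zero.not.mpr
      (((Measure.measure_Ioo_pos ν).mpr hxy).trans_le (measure_mono Ioo_subset_Ioc_self)).ne'
  have hlt : 0 < ∫ u in x..y, f u ∂ν := by
    rw [intervalIntegral.integral_of_le hxy.le]
    exact integral_pos_of_ae_pos hν hint.1 (ae_restrict_of_ae_restrict_of_subset hxyI hpos)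
  calc ∫ u in e..x, f u ∂ν
      < (∫ u in e..x, f u ∂ν) + ∫ u in x..y, f u ∂ν := lt_add_of_pos_right _ hlt
    _ = ∫ u in e..y, f u ∂ν := intervalIntegral.integral_add_adjacent_intervals
      (intervalIntegrable_of_locallyIntegrableOn hI hf he hx) hint

end Primitive

theorem stmt0_general {I : Set ℝ} (hI : I.OrdConnected) {ν κ : Measure ℝ} [ν.IsOpenPosMeasure]
    [NullSingletonClass ν] {g : ℝ → ℝ} (hg : LocallyIntegrableOn g I ν)
    (hsing : κ.MutuallySingular (ν.restrict I))
    (habs : ν.restrict I ≪ (ν.restrict I).withDensity (fun x => ENNReal.ofReal (g x)) + κ)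
    {e : ℝ} (he : e ∈ I) :
    (∀ᵐ x ∂(ν.restrict I), 0 < g x) ∧
    StrictMonoOn (fun x => ∫ u in e..x, g u ∂ν) I ∧
    ContinuousOn (fun x => ∫ u in e..x, g u ∂ν) I := by
  have hpos : ∀ᵐ x ∂(ν.restrict I), 0 < g x :=
    (ae_ne_zero_of_absolutelyContinuous_withDensity_add
      hg.aestronglyMeasurable.aemeasurable.ennreal_ofReal hsing habs).mono
      fun _ hx => ENNReal.ofReal_pos.mp hx.pos
  exact ⟨hpos, strictMonoOn_primitive_of_ae_pos hI hg hpos he,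
    continuousOn_primitive_of_locallyIntegrableOn hI hg he⟩

/-- If the Lebesgue measure on the open interval `I` is absolutely continuous
with respect to the Stieltjes measure `μ` of the strictly increasing continuous `s : I → ℝ`,
whose Lebesgue decomposition is `μ = g·λ + κ` with `κ ⊥ λ`, then `g > 0` a.e. on `I`, and
consequently `s̄(x) = ∫_e^x g` is strictly increasing and continuous on `I`. -/
theorem stmt0 (I : Set ℝ) (hIopen : IsOpen I) (hIconn : I.OrdConnected)
    (s : ℝ → ℝ) (hmono : StrictMonoOn s I) (hcont : ContinuousOn s I)
    (μ : Measure ℝ) (hμI : μ Iᶜ = 0)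
    (hμ : ∀ x ∈ I, ∀ y ∈ I, x ≤ y → μ (Set.Ioc x y) = ENNReal.ofReal (s y - s x))
    (g : ℝ → ℝ) (hg0 : ∀ x, 0 ≤ g x)
    (hgloc : LocallyIntegrableOn g I volume)
    (κ : Measure ℝ)
    (hdecomp : μ = (volume.restrict I).withDensity (fun x => ENNReal.ofReal (g x)) + κ)
    (hsing : κ.MutuallySingular (volume.restrict I))
    (habs : volume.restrict I ≪ μ)
    (e : ℝ) (he : e ∈ I) :
    (∀ᵐ x ∂(volume.restrict I), 0 < g x) ∧
    StrictMonoOn (fun x => ∫ u in e..x, g u) I ∧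
    ContinuousOn (fun x => ∫ u in e..x, g u) I :=
  stmt0_general hIconn hgloc hsing (hdecomp ▸ habs) he
end

section
/- Let I, J ⊆ ℝ be open intervals, s : I → J a strictly increasing continuous bijection with inverse t : J → I, and μ the Stieltjes measure of s. Then t is absolutely continuous on J (i.e., there exists a locally integrable function g ≥ 0 on J with t(y) − t(x) = ∫_x^y g(u) du for all x ≤ y in J) if and only if Lebesgue measure λ on I is absolutely continuous with respect to μ. -/
open MeasureTheory Set

/-!
The homeomorphism `s` carries `μ` to Lebesgue measure on `J`, and carries Lebesgue measure on `I`
to the Stieltjes measure `ρ` of `t`; the inverse `t` carries both back. Since images preserve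
absolute continuity, `λ|_I ≪ μ` is the same as `ρ ≪ λ|_J`. By Radon–Nikodym the latter says that
`ρ` has a density with respect to `λ|_J`, and such a density is the same as a density of `t`.
-/

section Order

variable {α β : Type*} [LinearOrder α] [Preorder β]

lemma preimage_Ioc_inter_of_strictMonoOn {s : α → β} {I : Set α} (hs : StrictMonoOn s I)
    (hI : I.OrdConnected) {a b : α} (ha : a ∈ I) (hb : b ∈ I) :
    s ⁻¹' Ioc (s a) (s b) ∩ I = Ioc a b := by
  have hsub : Ioc a b ⊆ I := Ioc_subset_Icc_self.trans (hI.out ha hb)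
  ext x
  refine ⟨fun ⟨hx, hxI⟩ => ?_, fun hx => ⟨?_, hsub hx⟩⟩
  · exact ⟨(hs.lt_iff_lt ha hxI).1 hx.1, (hs.le_iff_le hxI hb).1 hx.2⟩
  · exact ⟨(hs.lt_iff_lt ha (hsub hx)).2 hx.1, (hs.le_iff_le (hsub hx) hb).2 hx.2⟩

end Order

section Topology

variable {α : Type*} [LinearOrder α] [TopologicalSpace α] [OrderTopology α] [DenselyOrdered α]
  [NoMinOrder α] [NoMaxOrder α] {U : Set α}

lemma exists_mem_Ioo_of_isOpen (hU : IsOpen U) {x : α} (hx : x ∈ U) :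
    ∃ a ∈ U, ∃ b ∈ U, x ∈ Ioo a b := by
  obtain ⟨l, u, ⟨hl, hu⟩, hsub⟩ := mem_nhds_iff_exists_Ioo_subset.1 (hU.mem_nhds hx)
  obtain ⟨a, hla, hax⟩ := exists_between hl
  obtain ⟨b, hxb, hbu⟩ := exists_between hu
  exact ⟨a, hsub ⟨hla, hax.trans hu⟩, b, hsub ⟨hl.trans hxb, hbu⟩, hax, hxb⟩

lemma exists_countable_eq_biUnion_Ioc [SecondCountableTopology α] (hU : IsOpen U)
    (hUc : U.OrdConnected) :
    ∃ T ⊆ U ×ˢ U, T.Countable ∧ U = ⋃ p ∈ T, Ioc p.1 p.2 := by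
  choose! a ha b hb hab using fun x (hx : x ∈ U) => exists_mem_Ioo_of_isOpen hU hx
  obtain ⟨c, hcU, hc, hcover⟩ := TopologicalSpace.countable_cover_nhdsWithin fun x hx =>
    mem_nhdsWithin_of_mem_nhds (Ioc_mem_nhds (hab x hx).1 (hab x hx).2)
  refine ⟨(fun x => (a x, b x)) '' c, ?_, hc.image _, Subset.antisymm ?_ ?_⟩
  · exact image_subset_iff.2 fun x hx => ⟨ha x (hcU hx), hb x (hcU hx)⟩
  · rwa [biUnion_image]
  · rw [biUnion_image]
    exact iUnion₂_subset fun x hx =>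
      Ioc_subset_Icc_self.trans (hUc.out (ha x (hcU hx)) (hb x (hcU hx)))

end Topology

lemma absolutelyContinuous_map_of_aemeasurable {α β : Type*} [MeasurableSpace α]
    [MeasurableSpace β] {μ ν : Measure α} {f : α → β} (h : μ ≪ ν) (hf : AEMeasurable f ν) :
    μ.map f ≪ ν.map f := by
  rw [Measure.map_congr hf.ae_eq_mk, Measure.map_congr (h.ae_eq hf.ae_eq_mk)]
  exact h.map hf.measurable_mk

/-- `μ` is the Stieltjes measure of `F` on the interval `I`, encoded as a measure on the whole
ambient order that vanishes off `I`. Monotonicity of `F` on `I` is not part of the definition: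
where `F` decreases, `ENNReal.ofReal` truncates the increment to `0`. -/
structure IsStieltjesMeasureOn {α : Type*} [Preorder α] [MeasurableSpace α] (μ : Measure α)
    (F : α → ℝ) (I : Set α) : Prop where
  measure_compl : μ Iᶜ = 0
  measure_Ioc : ∀ x ∈ I, ∀ y ∈ I, x ≤ y → μ (Ioc x y) = ENNReal.ofReal (F y - F x)

namespace IsStieltjesMeasureOn

section Finiteness

variable {α : Type*} [Preorder α] [MeasurableSpace α] {μ : Measure α} {F : α → ℝ} {I : Set α}

lemma restrict_self (hμ : IsStieltjesMeasureOn μ F I) : μ.restrict I = μ :=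
  Measure.restrict_eq_self_of_ae_mem (mem_ae_iff.2 hμ.measure_compl)

lemma measure_Ioc_lt_top (hμ : IsStieltjesMeasureOn μ F I) {a b : α} (ha : a ∈ I) (hb : b ∈ I) :
    μ (Ioc a b) < ⊤ := by
  by_cases hab : a ≤ b
  · exact hμ.measure_Ioc a ha b hb hab ▸ ENNReal.ofReal_lt_top
  · rw [Ioc_eq_empty fun h => hab h.le, measure_empty]
    exact ENNReal.zero_lt_top

end Finiteness

section Uniqueness

variable {α : Type*} [LinearOrder α] [TopologicalSpace α] [OrderTopology α]
  [SecondCountableTopology α] [NoMinOrder α] [MeasurableSpace α] {μ ν : Measure α} {F : α → ℝ}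
  {I : Set α}

lemma restrict_Ioc_eq [BorelSpace α] (hμ : IsStieltjesMeasureOn μ F I)
    (hν : IsStieltjesMeasureOn ν F I) (hI : I.OrdConnected) {a b : α} (ha : a ∈ I) (hb : b ∈ I) :
    μ.restrict (Ioc a b) = ν.restrict (Ioc a b) := by
  refine Measure.ext_of_Ioc' _ _ (fun x y _ => ?_) fun x y _ => ?_
  · exact ((measure_mono (subset_univ _)).trans_lt
      (Measure.restrict_apply_univ (Ioc a b) ▸ hμ.measure_Ioc_lt_top ha hb)).ne
  · rw [Measure.restrict_apply measurableSet_Ioc, Measure.restrict_apply measurableSet_Ioc,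
      Ioc_inter_Ioc]
    obtain hle | hle := le_total (min y b) (max x a)
    · simp only [Ioc_eq_empty_of_le hle, measure_empty]
    · have hxa : max x a ∈ I := hI.out ha hb ⟨le_max_right _ _, hle.trans (min_le_right _ _)⟩
      have hyb : min y b ∈ I := hI.out ha hb ⟨(le_max_right _ _).trans hle, min_le_right _ _⟩
      rw [hμ.measure_Ioc _ hxa _ hyb hle, hν.measure_Ioc _ hxa _ hyb hle]

variable [DenselyOrdered α] [NoMaxOrder α]

lemma unique [BorelSpace α] (hμ : IsStieltjesMeasureOn μ F I) (hν : IsStieltjesMeasureOn ν F I)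
    (hIo : IsOpen I) (hI : I.OrdConnected) : μ = ν := by
  obtain ⟨T, hTI, hT, hcover⟩ := exists_countable_eq_biUnion_Ioc hIo hI
  rw [← hμ.restrict_self, ← hν.restrict_self, hcover, Measure.restrict_biUnion_congr hT]
  exact fun p hp => hμ.restrict_Ioc_eq hν hI (hTI hp).1 (hTI hp).2

lemma sigmaFinite (hμ : IsStieltjesMeasureOn μ F I) (hIo : IsOpen I) (hI : I.OrdConnected) :
    SigmaFinite μ := by
  obtain ⟨T, hTI, hT, hcover⟩ := exists_countable_eq_biUnion_Ioc hIo hI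
  refine Measure.sigmaFinite_of_countable (S := insert Iᶜ ((fun p => Ioc p.1 p.2) '' T))
    ((hT.image _).insert _) ?_ ?_
  · rw [forall_mem_insert, forall_mem_image]
    exact ⟨hμ.measure_compl ▸ ENNReal.zero_lt_top,
      fun p hp => hμ.measure_Ioc_lt_top (hTI hp).1 (hTI hp).2⟩
  · rw [sUnion_insert, sUnion_image, ← hcover, compl_union_self]

end Uniqueness

section Map

variable {α β : Type*} [LinearOrder α] [TopologicalSpace α] [OrderTopology α]
  [MeasurableSpace α] [BorelSpace α] [LinearOrder β] [TopologicalSpace β] [OrderTopology β]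
  [SecondCountableTopology β] [MeasurableSpace β] [BorelSpace β]
  {μ : Measure α} {F : α → ℝ} {I : Set α} {G : β → ℝ} {J : Set β} {s : α → β}

lemma aemeasurable_of_monotoneOn (hμ : IsStieltjesMeasureOn μ F I) (hI : I.OrdConnected)
    (hs : MonotoneOn s I) : AEMeasurable s μ :=
  hμ.restrict_self ▸ aemeasurable_restrict_of_monotoneOn hI.measurableSet hs

lemma map (hμ : IsStieltjesMeasureOn μ F I) (hI : I.OrdConnected) (hJ : J.OrdConnected)
    (hs : StrictMonoOn s I) (hsIJ : s '' I = J) (hGF : EqOn (G ∘ s) F I) :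
    IsStieltjesMeasureOn (μ.map s) G J where
  measure_compl := by
    rw [Measure.map_apply_of_aemeasurable (hμ.aemeasurable_of_monotoneOn hI hs.monotoneOn)
      hJ.measurableSet.compl]
    have hsub : s ⁻¹' Jᶜ ⊆ Iᶜ := fun x hx hxI => hx (hsIJ ▸ mem_image_of_mem s hxI)
    exact measure_mono_null hsub hμ.measure_compl
  measure_Ioc := by
    rw [← hsIJ, forall_mem_image]
    intro a ha
    rw [forall_mem_image]
    intro b hb hab
    rw [Measure.map_apply_of_aemeasurable (hμ.aemeasurable_of_monotoneOn hI hs.monotoneOn)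
      measurableSet_Ioc, ← hμ.restrict_self, Measure.restrict_apply' hI.measurableSet,
      preimage_Ioc_inter_of_strictMonoOn hs hI ha hb,
      hμ.measure_Ioc a ha b hb ((hs.le_iff_le ha hb).1 hab), ← hGF ha, ← hGF hb,
      Function.comp_apply, Function.comp_apply]

variable [DenselyOrdered β] [NoMinOrder β] [NoMaxOrder β] {μ₁ μ₂ : Measure α} {F₁ F₂ : α → ℝ}
  {ν ν₁ ν₂ : Measure β} {G₁ G₂ : β → ℝ}

lemma map_eq (hμ : IsStieltjesMeasureOn μ F I) (hν : IsStieltjesMeasureOn ν G J)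
    (hI : I.OrdConnected) (hJo : IsOpen J) (hJ : J.OrdConnected) (hs : StrictMonoOn s I)
    (hsIJ : s '' I = J) (hGF : EqOn (G ∘ s) F I) : μ.map s = ν :=
  (hμ.map hI hJ hs hsIJ hGF).unique hν hJo hJ

lemma absolutelyContinuous_of_strictMonoOn
    (hμ₁ : IsStieltjesMeasureOn μ₁ F₁ I) (hμ₂ : IsStieltjesMeasureOn μ₂ F₂ I)
    (hν₁ : IsStieltjesMeasureOn ν₁ G₁ J) (hν₂ : IsStieltjesMeasureOn ν₂ G₂ J)
    (hI : I.OrdConnected) (hJo : IsOpen J) (hJ : J.OrdConnected) (hs : StrictMonoOn s I)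
    (hsIJ : s '' I = J) (hGF₁ : EqOn (G₁ ∘ s) F₁ I) (hGF₂ : EqOn (G₂ ∘ s) F₂ I)
    (h : μ₁ ≪ μ₂) : ν₁ ≪ ν₂ := by
  rw [← hμ₁.map_eq hν₁ hI hJo hJ hs hsIJ hGF₁, ← hμ₂.map_eq hν₂ hI hJo hJ hs hsIJ hGF₂]
  exact absolutelyContinuous_map_of_aemeasurable h (hμ₂.aemeasurable_of_monotoneOn hI hs.monotoneOn)

end Map

end IsStieltjesMeasureOn

lemma isStieltjesMeasureOn_volume_restrict {I : Set ℝ} (hI : I.OrdConnected) :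
    IsStieltjesMeasureOn (volume.restrict I) id I where
  measure_compl := by
    rw [Measure.restrict_apply hI.measurableSet.compl, compl_inter_self, measure_empty]
  measure_Ioc x hx y hy _ := by
    rw [Measure.restrict_eq_self _ (Ioc_subset_Icc_self.trans (hI.out hx hy)), Real.volume_Ioc,
      id, id]

section Density

variable {F g : ℝ → ℝ} {J : Set ℝ} {m ρ : Measure ℝ}

/-- `g` is a nonnegative density of `F` on the interval `J` with respect to `m`; for `m` Lebesgue
measure, its existence is the absolute continuity of an increasing function `F`. -/
def IsDensityOn (m : Measure ℝ) (g F : ℝ → ℝ) (J : Set ℝ) : Prop :=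
  (∀ u, 0 ≤ g u) ∧ LocallyIntegrableOn g J m ∧
    ∀ x ∈ J, ∀ y ∈ J, x ≤ y → F y - F x = ∫ u in x..y, g u ∂m

lemma IsDensityOn.isStieltjesMeasureOn_withDensity (hg : IsDensityOn m g F J)
    (hJ : J.OrdConnected) :
    IsStieltjesMeasureOn ((m.restrict J).withDensity fun u => ENNReal.ofReal (g u)) F J where
  measure_compl := withDensity_absolutelyContinuous _ _ <| by
    rw [Measure.restrict_apply hJ.measurableSet.compl, compl_inter_self, measure_empty]
  measure_Ioc x hx y hy hxy := by
    obtain ⟨hg_nonneg, hg_loc, hg_int⟩ := hg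
    have hIcc : Icc x y ⊆ J := hJ.out hx hy
    have hint : IntegrableOn g (Ioc x y) m :=
      (hg_loc.integrableOn_compact_subset hIcc isCompact_Icc).mono_set Ioc_subset_Icc_self
    rw [withDensity_apply _ measurableSet_Ioc,
      Measure.restrict_restrict_of_subset (Ioc_subset_Icc_self.trans hIcc),
      ← ofReal_integral_eq_lintegral_ofReal hint (.of_forall hg_nonneg),
      hg_int x hx y hy hxy, intervalIntegral.integral_of_le hxy]

lemma IsDensityOn.absolutelyContinuous (hg : IsDensityOn m g F J)
    (hρ : IsStieltjesMeasureOn ρ F J) (hJo : IsOpen J) (hJ : J.OrdConnected) :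
    ρ ≪ m.restrict J :=
  hρ.unique (hg.isStieltjesMeasureOn_withDensity hJ) hJo hJ ▸ withDensity_absolutelyContinuous _ _

namespace IsStieltjesMeasureOn

lemma isDensityOn_rnDeriv [SigmaFinite m] (hρ : IsStieltjesMeasureOn ρ F J) (hJo : IsOpen J)
    (hJ : J.OrdConnected) (hF : MonotoneOn F J) (hac : ρ ≪ m) :
    IsDensityOn m (fun u => (ρ.rnDeriv m u).toReal) F J := by
  have := hρ.sigmaFinite hJo hJ
  have hmeas : Measurable (ρ.rnDeriv m) := Measure.measurable_rnDeriv ρ m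
  have hfin : ∀ x ∈ J, ∀ y ∈ J, ∫⁻ u in Ioc x y, ρ.rnDeriv m u ∂m ≠ ⊤ := fun x hx y hy =>
    Measure.setLIntegral_rnDeriv hac (Ioc x y) ▸ (hρ.measure_Ioc_lt_top hx hy).ne
  refine ⟨fun u => ENNReal.toReal_nonneg, fun x hx => ?_, fun x hx y hy hxy => ?_⟩
  · obtain ⟨a, ha, b, hb, hax, hxb⟩ := exists_mem_Ioo_of_isOpen hJo hx
    exact ⟨Ioc a b, mem_nhdsWithin_of_mem_nhds (Ioc_mem_nhds hax hxb),
      integrable_toReal_of_lintegral_ne_top hmeas.aemeasurable (hfin a ha b hb)⟩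
  · rw [intervalIntegral.integral_of_le hxy,
      integral_toReal hmeas.aemeasurable (ae_lt_top hmeas (hfin x hx y hy)),
      Measure.setLIntegral_rnDeriv hac, hρ.measure_Ioc x hx y hy hxy,
      ENNReal.toReal_ofReal (sub_nonneg.2 (hF hx hy hxy))]

lemma exists_isDensityOn_iff [SigmaFinite m] (hρ : IsStieltjesMeasureOn ρ F J) (hJo : IsOpen J)
    (hJ : J.OrdConnected) (hF : MonotoneOn F J) :
    (∃ g, IsDensityOn m g F J) ↔ ρ ≪ m.restrict J :=
  ⟨fun ⟨_, hg⟩ => hg.absolutelyContinuous hρ hJo hJ,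
    fun hac => ⟨_, hρ.isDensityOn_rnDeriv hJo hJ hF
      (hac.trans Measure.absolutelyContinuous_restrict)⟩⟩

end IsStieltjesMeasureOn

end Density

/-- For a strictly increasing continuous bijection `s : I → J` between open
intervals with inverse `t` and Stieltjes measure `μ`, the inverse `t` is absolutely continuous
on `J` (has a nonnegative locally integrable density) iff Lebesgue measure on `I` is absolutely
continuous with respect to `μ`. -/
theorem stmt1 (I J : Set ℝ) (hIopen : IsOpen I) (hIconn : I.OrdConnected)
    (hJopen : IsOpen J) (hJconn : J.OrdConnected)
    (s t : ℝ → ℝ) (hmono : StrictMonoOn s I) (hcont : ContinuousOn s I)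
    (hmaps : Set.MapsTo s I J) (hsurj : Set.SurjOn s I J)
    (hts : ∀ x ∈ I, t (s x) = x) (hst : ∀ y ∈ J, s (t y) = y)
    (μ : Measure ℝ) (hμI : μ Iᶜ = 0)
    (hμ : ∀ x ∈ I, ∀ y ∈ I, x ≤ y → μ (Set.Ioc x y) = ENNReal.ofReal (s y - s x)) :
    (∃ g : ℝ → ℝ, (∀ u, 0 ≤ g u) ∧ LocallyIntegrableOn g J volume ∧
      ∀ x ∈ J, ∀ y ∈ J, x ≤ y → t y - t x = ∫ u in x..y, g u) ↔
    volume.restrict I ≪ μ := by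
  have hIJ : BijOn s I J := ⟨hmaps, hmono.injOn, hsurj⟩
  have hJI : BijOn t J I := hIJ.symm ⟨hst, hts⟩
  have htmono : StrictMonoOn t J :=
    (Function.monotoneOn_of_rightInvOn_of_mapsTo hmono.monotoneOn hst
      hJI.mapsTo).strictMonoOn_of_injOn hJI.injOn
  have hvolI := isStieltjesMeasureOn_volume_restrict hIconn
  have hvolJ := isStieltjesMeasureOn_volume_restrict hJconn
  have hs : IsStieltjesMeasureOn μ s I := ⟨hμI, hμ⟩
  have ht : IsStieltjesMeasureOn ((volume.restrict I).map s) t J :=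
    hvolI.map hIconn hJconn hmono hIJ.image_eq hts
  refine (ht.exists_isDensityOn_iff hJopen hJconn htmono.monotoneOn).trans ⟨?_, ?_⟩
  · exact ht.absolutelyContinuous_of_strictMonoOn hvolJ hvolI hs hJconn hIopen hIconn htmono
      hJI.image_eq (eqOn_refl _ _) hst
  · exact hvolI.absolutelyContinuous_of_strictMonoOn hs ht hvolJ hIconn hJopen hJconn hmono
      hIJ.image_eq hts (eqOn_refl _ _)
end

section
/- Let I, J ⊆ ℝ be open intervals, s : I → J a strictly increasing continuous bijection with inverse t, μ the Stieltjes measure of s, and suppose t is absolutely continuous on J with density g (a locally integrable function with t(y) − t(x) = ∫_x^y g(u) du for all x ≤ y in J). Then Lebesgue measure on I equals the measure (g∘s)·μ; that is, for every Borel set A ⊆ I, λ(A) = ∫_A g(s(x)) dμ(x). -/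
open MeasureTheory Set

/-!
A continuous monotone `s` pushes its Stieltjes measure `μ` on `(a, b]` forward to Lebesgue measure
on `(s a, s b]`, because the sublevel sets of `s` in `(a, b]` are intervals `(a, z]` whose
`μ`-measure is an increment of `s`. Hence
`∫_(a, b] g (s x) dμ(x) = ∫_(s a, s b] g u du = t (s b) - t (s a) = b - a = λ((a, b])`,
where `g ≥ 0` almost everywhere since `g` is almost everywhere the derivative of the increasing
function `t`. Two measures that agree on the compactly contained half-open intervals of an open
set agree on that set.
-/

/-- `μ` is the Stieltjes measure of `s` on `I`. Only intervals contained in `I` are tested, so `I`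
need not be an interval and nothing is said about `μ` outside `I`. -/
def IsStieltjesMeasureOn_s2 (μ : Measure ℝ) (s : ℝ → ℝ) (I : Set ℝ) : Prop :=
  ∀ ⦃x y⦄, x ≤ y → Icc x y ⊆ I → μ (Ioc x y) = ENNReal.ofReal (s y - s x)

/-- `f` is absolutely continuous on `J` with density `g`. Only intervals contained in `J` are
tested, so `J` need not be an interval. -/
structure HasDensityOn (f g : ℝ → ℝ) (J : Set ℝ) : Prop where
  locallyIntegrableOn : LocallyIntegrableOn g J
  sub_eq_integral : ∀ ⦃x y⦄, x ≤ y → Icc x y ⊆ J → f y - f x = ∫ u in x..y, g u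

section Order

variable {α : Type*} [TopologicalSpace α]

theorem restrict_eq_restrict_of_Ioc [SecondCountableTopology α] [LinearOrder α] [OrderTopology α]
    [DenselyOrdered α] [NoMinOrder α] [NoMaxOrder α] [MeasurableSpace α] [BorelSpace α]
    {U : Set α} (hU : IsOpen U) {μ ν : Measure α}
    (hfin : ∀ a b, a ≤ b → Icc a b ⊆ U → μ (Ioc a b) ≠ ⊤)
    (h : ∀ a b, a ≤ b → Icc a b ⊆ U → μ (Ioc a b) = ν (Ioc a b)) :
    μ.restrict U = ν.restrict U := by
  have hcover : ⋃ p ∈ {p : α × α | Icc p.1 p.2 ⊆ U}, Ioo p.1 p.2 = U := by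
    refine subset_antisymm (iUnion₂_subset fun p hp ↦ Ioo_subset_Icc_self.trans hp) fun x hx ↦ ?_
    obtain ⟨a, b, hxab, hab⟩ := mem_nhds_iff_exists_Ioo_subset.1 (hU.mem_nhds hx)
    obtain ⟨a', haa', ha'x⟩ := exists_between hxab.1
    obtain ⟨b', hxb', hb'b⟩ := exists_between hxab.2
    exact mem_biUnion (x := (a', b')) ((Icc_subset_Ioo haa' hb'b).trans hab) ⟨ha'x, hxb'⟩
  obtain ⟨T, hTU, hT, hTcover⟩ := TopologicalSpace.isOpen_biUnion_countable
    {p : α × α | Icc p.1 p.2 ⊆ U} (fun p ↦ Ioo p.1 p.2) fun _ _ ↦ isOpen_Ioo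
  rw [← hcover, ← hTcover, Measure.restrict_biUnion_congr hT]
  rintro ⟨a, b⟩ habT
  have hsub : Icc a b ⊆ U := hTU habT
  have hclip (c d : α) : μ (Ioc c d ∩ Ioc a b) ≠ ⊤ ∧
      μ (Ioc c d ∩ Ioc a b) = ν (Ioc c d ∩ Ioc a b) := by
    rw [Ioc_inter_Ioc]
    rcases le_or_gt (max c a) (min d b) with hle | hlt
    · have hsub' : Icc (max c a) (min d b) ⊆ U :=
        (Icc_subset_Icc (le_max_right _ _) (min_le_right _ _)).trans hsub
      exact ⟨hfin _ _ hle hsub', h _ _ hle hsub'⟩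
    · simp [Ioc_eq_empty_of_le hlt.le]
  refine Measure.restrict_congr_mono Ioo_subset_Ioc_self ?_
  refine Measure.ext_of_Ioc' _ _ (fun c d _ ↦ ?_) fun c d _ ↦ ?_
  all_goals simp only [Measure.restrict_apply measurableSet_Ioc]
  exacts [(hclip c d).1, (hclip c d).2]

theorem exists_forall_le_iff_of_monotoneOn_Icc [ConditionallyCompleteLinearOrder α]
    [OrderTopology α] [DenselyOrdered α] {β : Type*} [LinearOrder β] [TopologicalSpace β]
    [OrderClosedTopology β] {f : α → β} {a b : α} {c : β} (hab : a ≤ b)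
    (hf : MonotoneOn f (Icc a b)) (hcont : ContinuousOn f (Icc a b)) (hc : f a ≤ c) :
    ∃ z ∈ Icc a b, f z = min c (f b) ∧ ∀ x ∈ Icc a b, f x ≤ c ↔ x ≤ z := by
  have hb : b ∈ Icc a b := right_mem_Icc.2 hab
  have hlevel : IsCompact (Icc a b ∩ f ⁻¹' {min c (f b)}) :=
    isCompact_Icc.of_isClosed_subset
      (hcont.preimage_isClosed_of_isClosed isClosed_Icc isClosed_singleton) inter_subset_left
  obtain ⟨z, ⟨hz, hfz : f z = min c (f b)⟩, hmax⟩ := hlevel.exists_isGreatest <|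
    intermediate_value_Icc hab hcont ⟨le_min hc (hf (left_mem_Icc.2 hab) hb hab), min_le_right _ _⟩
  refine ⟨z, hz, hfz, fun x hx ↦ ⟨fun hxc ↦ ?_, fun hxz ↦ ?_⟩⟩
  · by_contra! hzx
    have hfx : f x ≤ min c (f b) := le_min hxc (hf hx hb hx.2)
    exact hzx.not_ge (hmax ⟨hx, hfx.antisymm (hfz ▸ hf hz hx hzx.le)⟩)
  · exact (hf hx hz hxz).trans (hfz.trans_le (min_le_left _ _))

end Order

namespace IsStieltjesMeasureOn_s2

variable {μ : Measure ℝ} {s : ℝ → ℝ} {a b : ℝ}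

theorem mono {I I' : Set ℝ} (hμ : IsStieltjesMeasureOn_s2 μ s I) (h : I' ⊆ I) :
    IsStieltjesMeasureOn_s2 μ s I' :=
  fun _ _ hxy hsub ↦ hμ hxy (hsub.trans h)

theorem map_restrict_Ioc (hμ : IsStieltjesMeasureOn_s2 μ s (Icc a b)) (hab : a ≤ b)
    (hs : MonotoneOn s (Icc a b)) (hcont : ContinuousOn s (Icc a b)) :
    (μ.restrict (Ioc a b)).map s = volume.restrict (Ioc (s a) (s b)) := by
  have hmeas : AEMeasurable s (μ.restrict (Ioc a b)) :=
    (hcont.mono Ioc_subset_Icc_self).aemeasurable measurableSet_Ioc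
  have : IsFiniteMeasure (μ.restrict (Ioc a b)) :=
    isFiniteMeasure_restrict.2 (by simp [hμ hab subset_rfl])
  refine Measure.ext_of_Iic _ _ fun c ↦ ?_
  rw [Measure.map_apply_of_aemeasurable hmeas measurableSet_Iic,
    Measure.restrict_apply' measurableSet_Ioc, Measure.restrict_apply measurableSet_Iic,
    inter_comm (Iic c), Ioc_inter_Iic, Real.volume_Ioc]
  rcases lt_or_ge c (s a) with hc | hc
  · have hempty : s ⁻¹' Iic c ∩ Ioc a b = ∅ := by
      refine eq_empty_of_forall_notMem fun x ⟨(hxc : s x ≤ c), hx⟩ ↦ hxc.not_gt ?_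
      exact hc.trans_le (hs (left_mem_Icc.2 hab) (Ioc_subset_Icc_self hx) hx.1.le)
    rw [hempty, measure_empty, ENNReal.ofReal_of_nonpos]
    exact sub_nonpos.2 ((min_le_right _ _).trans hc.le)
  · obtain ⟨z, hz, hsz, hle⟩ := exists_forall_le_iff_of_monotoneOn_Icc hab hs hcont hc
    have hsublevel : s ⁻¹' Iic c ∩ Ioc a b = Ioc a z := by
      ext x
      refine ⟨fun ⟨hxc, hx⟩ ↦ ⟨hx.1, (hle x (Ioc_subset_Icc_self hx)).1 hxc⟩, fun hx ↦ ?_⟩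
      have hxb : x ≤ b := hx.2.trans hz.2
      exact ⟨(hle x ⟨hx.1.le, hxb⟩).2 hx.2, hx.1, hxb⟩
    rw [hsublevel, hμ hz.1 (Icc_subset_Icc_right hz.2), hsz, min_comm]

theorem setLIntegral_comp (hμ : IsStieltjesMeasureOn_s2 μ s (Icc a b)) (hab : a ≤ b)
    (hs : MonotoneOn s (Icc a b)) (hcont : ContinuousOn s (Icc a b)) {φ : ℝ → ENNReal}
    (hφ : AEMeasurable φ (volume.restrict (Ioc (s a) (s b)))) :
    ∫⁻ x in Ioc a b, φ (s x) ∂μ = ∫⁻ u in Ioc (s a) (s b), φ u := by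
  rw [← hμ.map_restrict_Ioc hab hs hcont] at hφ ⊢
  exact (lintegral_map' hφ
    ((hcont.mono Ioc_subset_Icc_self).aemeasurable measurableSet_Ioc)).symm

end IsStieltjesMeasureOn_s2

namespace HasDensityOn

variable {f g : ℝ → ℝ} {a b : ℝ}

theorem mono {J J' : Set ℝ} (hf : HasDensityOn f g J) (h : J' ⊆ J) : HasDensityOn f g J' :=
  ⟨hf.locallyIntegrableOn.mono_set h, fun _ _ hxy hsub ↦ hf.sub_eq_integral hxy (hsub.trans h)⟩

theorem integrableOn_Icc (hf : HasDensityOn f g (Icc a b)) : IntegrableOn g (Icc a b) :=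
  hf.locallyIntegrableOn.integrableOn_isCompact isCompact_Icc

theorem ae_hasDerivWithinAt (hf : HasDensityOn f g (Icc a b)) (hab : a ≤ b) :
    ∀ᵐ x ∂volume.restrict (Icc a b), HasDerivWithinAt f (g x) (Icc a b) x := by
  have hint : IntervalIntegrable g volume a b :=
    (intervalIntegrable_iff_integrableOn_Icc_of_le hab).2 hf.integrableOn_Icc
  have hprimitive : ∀ y ∈ Icc a b, f y = f a + ∫ u in a..y, g u := fun y hy ↦ by
    rw [← hf.sub_eq_integral hy.1 (Icc_subset_Icc_right hy.2), add_sub_cancel]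
  rw [ae_restrict_iff' measurableSet_Icc]
  filter_upwards [hint.ae_hasDerivAt_integral] with x hx hxab
  rw [uIcc_of_le hab] at hx
  have hderiv : HasDerivAt (fun y ↦ f a + ∫ u in a..y, g u) (g x) x :=
    (hx hxab a (left_mem_Icc.2 hab)).const_add (f a)
  exact hderiv.hasDerivWithinAt.congr hprimitive (hprimitive x hxab)

theorem ae_nonneg_of_monotoneOn (hf : HasDensityOn f g (Icc a b)) (hmono : MonotoneOn f (Icc a b)) :
    ∀ᵐ x ∂volume.restrict (Icc a b), 0 ≤ g x := by
  rcases lt_or_ge a b with hab | hba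
  · filter_upwards [hf.ae_hasDerivWithinAt hab.le, ae_restrict_mem measurableSet_Icc] with x hx hxab
    exact hx.nonneg_of_monotoneOn (uniqueDiffOn_Icc hab x hxab).accPt hmono
  · simp [Measure.restrict_eq_zero.2 ((subsingleton_Icc_of_ge hba).measure_zero volume)]

theorem setLIntegral_ofReal_of_monotoneOn (hf : HasDensityOn f g (Icc a b)) (hab : a ≤ b)
    (hmono : MonotoneOn f (Icc a b)) :
    ∫⁻ u in Ioc a b, ENNReal.ofReal (g u) = ENNReal.ofReal (f b - f a) := by
  rw [hf.sub_eq_integral hab subset_rfl, intervalIntegral.integral_of_le hab]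
  exact (ofReal_integral_eq_lintegral_ofReal (hf.integrableOn_Icc.mono_set Ioc_subset_Icc_self)
    (ae_restrict_of_ae_restrict_of_subset Ioc_subset_Icc_self
      (hf.ae_nonneg_of_monotoneOn hmono))).symm

end HasDensityOn

theorem setLIntegral_ofReal_comp_eq_volume_Ioc {s t g : ℝ → ℝ} {μ : Measure ℝ} {a b : ℝ}
    (hab : a ≤ b) (hs : MonotoneOn s (Icc a b)) (hcont : ContinuousOn s (Icc a b))
    (hts : LeftInvOn t s (Icc a b)) (hμ : IsStieltjesMeasureOn_s2 μ s (Icc a b))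
    (ht : HasDensityOn t g (s '' Icc a b)) :
    ∫⁻ x in Ioc a b, ENNReal.ofReal (g (s x)) ∂μ = volume (Ioc a b) := by
  have ha : a ∈ Icc a b := left_mem_Icc.2 hab
  have hb : b ∈ Icc a b := right_mem_Icc.2 hab
  have himage : Icc (s a) (s b) ⊆ s '' Icc a b := intermediate_value_Icc hab hcont
  have htmono : MonotoneOn t (s '' Icc a b) :=
    Function.monotoneOn_of_rightInvOn_of_mapsTo hs hts.rightInvOn_image
      (hts.mapsTo (surjOn_image s _))
  have ht' : HasDensityOn t g (Icc (s a) (s b)) := ht.mono himage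
  have hg : AEMeasurable g (volume.restrict (Ioc (s a) (s b))) :=
    (ht'.integrableOn_Icc.mono_set Ioc_subset_Icc_self).aemeasurable
  calc ∫⁻ x in Ioc a b, ENNReal.ofReal (g (s x)) ∂μ
      = ∫⁻ u in Ioc (s a) (s b), ENNReal.ofReal (g u) :=
        hμ.setLIntegral_comp hab hs hcont hg.ennreal_ofReal
    _ = ENNReal.ofReal (t (s b) - t (s a)) :=
        ht'.setLIntegral_ofReal_of_monotoneOn (hs ha hb hab) (htmono.mono himage)
    _ = volume (Ioc a b) := by rw [hts ha, hts hb, Real.volume_Ioc]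

theorem volume_restrict_eq_withDensity_restrict {I : Set ℝ} (hI : IsOpen I) {s t g : ℝ → ℝ}
    (hs : MonotoneOn s I) (hcont : ContinuousOn s I) (hts : LeftInvOn t s I) {μ : Measure ℝ}
    (hμ : IsStieltjesMeasureOn_s2 μ s I) (ht : HasDensityOn t g (s '' I)) :
    volume.restrict I = (μ.withDensity fun x ↦ ENNReal.ofReal (g (s x))).restrict I := by
  refine restrict_eq_restrict_of_Ioc hI (fun a b _ _ ↦ measure_Ioc_lt_top.ne) fun a b hab hsub ↦ ?_
  rw [withDensity_apply _ measurableSet_Ioc]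
  exact (setLIntegral_ofReal_comp_eq_volume_Ioc hab (hs.mono hsub) (hcont.mono hsub) (hts.mono hsub)
    (hμ.mono hsub) (ht.mono (image_mono hsub))).symm

theorem stmt2_general {I : Set ℝ} (hI : IsOpen I) {s t g : ℝ → ℝ} (hs : MonotoneOn s I)
    (hcont : ContinuousOn s I) (hts : LeftInvOn t s I) {μ : Measure ℝ}
    (hμ : IsStieltjesMeasureOn_s2 μ s I) (ht : HasDensityOn t g (s '' I)) :
    ∀ A ⊆ I, MeasurableSet A → volume A = ∫⁻ x in A, ENNReal.ofReal (g (s x)) ∂μ := by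
  intro A hAI hA
  rw [← withDensity_apply _ hA, ← Measure.restrict_eq_self volume hAI,
    volume_restrict_eq_withDensity_restrict hI hs hcont hts hμ ht, Measure.restrict_eq_self _ hAI]

/-- If the inverse `t` of the strictly increasing continuous bijection
`s : I → J` is absolutely continuous with density `g`, then Lebesgue measure on `I` equals
the measure `(g∘s)·μ`, i.e. `λ(A) = ∫_A g(s(x)) dμ(x)` for all Borel `A ⊆ I`, where `μ` is
the Stieltjes measure of `s`. -/
theorem stmt2 (I J : Set ℝ) (hIopen : IsOpen I) (hIconn : I.OrdConnected)
    (hJopen : IsOpen J) (hJconn : J.OrdConnected)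
    (s t : ℝ → ℝ) (hmono : StrictMonoOn s I) (hcont : ContinuousOn s I)
    (hmaps : Set.MapsTo s I J) (hsurj : Set.SurjOn s I J)
    (hts : ∀ x ∈ I, t (s x) = x) (hst : ∀ y ∈ J, s (t y) = y)
    (μ : Measure ℝ) (hμI : μ Iᶜ = 0)
    (hμ : ∀ x ∈ I, ∀ y ∈ I, x ≤ y → μ (Set.Ioc x y) = ENNReal.ofReal (s y - s x))
    (g : ℝ → ℝ) (hgloc : LocallyIntegrableOn g J volume)
    (hgdens : ∀ x ∈ J, ∀ y ∈ J, x ≤ y → t y - t x = ∫ u in x..y, g u) :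
    ∀ A ⊆ I, MeasurableSet A →
      volume A = ∫⁻ x in A, ENNReal.ofReal (g (s x)) ∂μ := by
  obtain rfl : s '' I = J := hsurj.image_eq_of_mapsTo hmaps
  exact stmt2_general hIopen hmono.monotoneOn hcont hts
    (fun x y hxy h ↦ hμ x (h (left_mem_Icc.2 hxy)) y (h (right_mem_Icc.2 hxy)) hxy)
    ⟨hgloc, fun x y hxy h ↦ hgdens x (h (left_mem_Icc.2 hxy)) y (h (right_mem_Icc.2 hxy)) hxy⟩
end

section
/- Let I, J ⊆ ℝ be open intervals, s : I → J a strictly increasing continuous bijection with inverse t, and suppose t is absolutely continuous on J with density g (a locally integrable function with t(y) − t(x) = ∫_x^y g(u) du for all x ≤ y in J). Then g(s(x)) > 0 for Lebesgue-almost every x ∈ I. -/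
open MeasureTheory Set

/-!
On a compact interval `[a, b]`, Lebesgue differentiation gives `t' = g` almost everywhere. Let `P`
be the set of points where `t' = g > 0`. The change of variables formula for monotone functions
yields `|t(P)| = ∫_P g ≥ ∫_a^b g = t(b) - t(a)`, so `t(P)` fills `[t(a), t(b)]` up to a null set.
A monotone function takes its value at a point of nonzero derivative nowhere else, so the points
where `g ≤ 0` have their image in that null set.
-/

theorem ofReal_integral_le_lintegral_ofReal {α : Type*} [MeasurableSpace α] {μ : Measure α}
    {f : α → ℝ} (hf : Integrable f μ) :
    ENNReal.ofReal (∫ x, f x ∂μ) ≤ ∫⁻ x, ENNReal.ofReal (f x) ∂μ := by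
  refine ENNReal.ofReal_le_of_le_toReal ?_
  rw [integral_eq_lintegral_pos_part_sub_lintegral_neg_part hf]
  exact sub_le_self _ ENNReal.toReal_nonneg

theorem eq_of_monotoneOn_of_hasDerivWithinAt_ne_zero {S : Set ℝ} (hS : S.OrdConnected)
    {f : ℝ → ℝ} (hf : MonotoneOn f S) {x y f' : ℝ} (hx : x ∈ S) (hy : y ∈ S)
    (hderiv : HasDerivWithinAt f f' S x) (hf' : f' ≠ 0) (hxy : f y = f x) : y = x := by
  by_contra hne
  have hsub : uIcc x y ⊆ S := hS.uIcc_subset hx hy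
  have hconst : EqOn f (fun _ => f x) (uIcc x y) := fun z hz => by
    simpa [hxy] using (hf.mono hsub).mapsTo_uIcc hz
  have hzero : HasDerivWithinAt f 0 (uIcc x y) x :=
    (hasDerivWithinAt_const x _ (f x)).congr hconst rfl
  have hunique : UniqueDiffWithinAt ℝ (uIcc x y) x :=
    uniqueDiffOn_Icc (min_lt_max.2 (Ne.symm hne)) x left_mem_uIcc
  exact hf' (hunique.eq_deriv _ (hderiv.mono hsub) hzero)

theorem ae_hasDerivAt_of_sub_eq_integral {E : Type*} [NormedAddCommGroup E] [NormedSpace ℝ E]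
    [CompleteSpace E] {a b : ℝ} {t g : ℝ → E} (hg : IntervalIntegrable g volume a b)
    (hdens : ∀ y ∈ Icc a b, t y - t a = ∫ u in a..y, g u) :
    ∀ᵐ y, y ∈ Ioo a b → HasDerivAt t (g y) y := by
  filter_upwards [hg.ae_hasDerivAt_integral] with y hderiv hy
  have hprim := (hderiv (Icc_subset_uIcc (Ioo_subset_Icc_self hy)) a left_mem_uIcc).add_const (t a)
  refine hprim.congr_of_eventuallyEq ?_
  filter_upwards [Icc_mem_nhds hy.1 hy.2] with z hz
  rw [← hdens z hz, sub_add_cancel]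

section

variable {a b : ℝ} {t g : ℝ → ℝ}

theorem exists_measurableSet_hasDerivAt_pos (hab : a ≤ b)
    (hg : IntervalIntegrable g volume a b)
    (hdens : ∀ y ∈ Icc a b, t y - t a = ∫ u in a..y, g u) :
    ∃ P ⊆ Ioo a b, MeasurableSet P ∧ (∀ y ∈ P, 0 < g y ∧ HasDerivAt t (g y) y) ∧
      ENNReal.ofReal (t b - t a) ≤ ∫⁻ y in P, ENNReal.ofReal (g y) := by
  obtain ⟨D, hD_sub, hD, hD_ae, hderiv⟩ : ∃ D ⊆ Ioo a b, MeasurableSet D ∧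
      D =ᵐ[volume] Ioc a b ∧ ∀ y ∈ D, HasDerivAt t (g y) y := by
    obtain ⟨D, hD_ae, hD, hderiv⟩ :=
      (ae_hasDerivAt_of_sub_eq_integral hg hdens).exists_measurable_mem
    exact ⟨D ∩ Ioo a b, inter_subset_right, hD.inter measurableSet_Ioo,
      (inter_ae_eq_right_of_ae_eq_univ (Filter.eventuallyEq_univ.2 hD_ae)).trans Ioo_ae_eq_Ioc,
      fun y hy => hderiv y hy.1 hy.2⟩
  have hderiv_eq : ∀ y ∈ D, deriv t y = g y := fun y hy => (hderiv y hy).deriv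
  have hpos : MeasurableSet {y | 0 < deriv t y} :=
    measurableSet_lt measurable_const (measurable_deriv t)
  have hsupport : Function.support (fun y => ENNReal.ofReal (deriv t y)) ⊆ {y | 0 < deriv t y} :=
    fun y hy => by simpa using hy
  -- `g` need not be measurable, so positivity is imposed on `deriv t`, which is.
  refine ⟨{y | 0 < deriv t y} ∩ D, inter_subset_right.trans hD_sub, hpos.inter hD,
    fun y hy => ⟨hderiv_eq y hy.2 ▸ hy.1, hderiv y hy.2⟩, ?_⟩
  calc ENNReal.ofReal (t b - t a)
      = ENNReal.ofReal (∫ y in Ioc a b, g y) := by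
        rw [hdens b (right_mem_Icc.2 hab), intervalIntegral.integral_of_le hab]
    _ ≤ ∫⁻ y in Ioc a b, ENNReal.ofReal (g y) := ofReal_integral_le_lintegral_ofReal hg.1
    _ = ∫⁻ y in D, ENNReal.ofReal (g y) := (setLIntegral_congr hD_ae).symm
    _ = ∫⁻ y in D, ENNReal.ofReal (deriv t y) :=
        setLIntegral_congr_fun hD fun y hy => by simp only [hderiv_eq y hy]
    _ = ∫⁻ y in {y | 0 < deriv t y} ∩ D, ENNReal.ofReal (deriv t y) := by
        rw [← Measure.restrict_restrict hpos, setLIntegral_eq_of_support_subset hsupport]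
    _ = ∫⁻ y in {y | 0 < deriv t y} ∩ D, ENNReal.ofReal (g y) :=
        setLIntegral_congr_fun (hpos.inter hD) fun y hy => by simp only [hderiv_eq y hy.2]

theorem volume_image_setOf_nonpos_eq_zero (hab : a ≤ b) (hmono : MonotoneOn t (Icc a b))
    (hg : IntervalIntegrable g volume a b)
    (hdens : ∀ y ∈ Icc a b, t y - t a = ∫ u in a..y, g u) :
    volume (t '' {y ∈ Icc a b | g y ≤ 0}) = 0 := by
  obtain ⟨P, hP_Ioo, hP, hpos_deriv, hle⟩ := exists_measurableSet_hasDerivAt_pos hab hg hdens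
  have hPsub : P ⊆ Icc a b := hP_Ioo.trans Ioo_subset_Icc_self
  have hderiv : ∀ y ∈ P, HasDerivWithinAt t (g y) P y := fun y hy =>
    (hpos_deriv y hy).2.hasDerivWithinAt
  have hfibre : ∀ y ∈ P, ∀ z ∈ Icc a b, t z = t y → z = y := fun y hy z hz =>
    eq_of_monotoneOn_of_hasDerivWithinAt_ne_zero ordConnected_Icc hmono (hPsub hy) hz
      (hpos_deriv y hy).2.hasDerivWithinAt (hpos_deriv y hy).1.ne'
  have himage_meas : MeasurableSet (t '' P) :=
    measurable_image_of_fderivWithin hP (fun y hy => (hderiv y hy).hasFDerivWithinAt)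
      fun y hy z hz hyz => hfibre z hz y (hPsub hy) hyz
  have hfull : volume (Icc (t a) (t b)) ≤ volume (t '' P) := by
    rwa [Real.volume_Icc,
      ← lintegral_deriv_eq_volume_image_of_monotoneOn hP hderiv (hmono.mono hPsub)]
  have himage_ae : t '' P =ᵐ[volume] Icc (t a) (t b) :=
    ae_eq_of_subset_of_measure_ge ((image_mono hPsub).trans hmono.image_Icc_subset) hfull
      himage_meas.nullMeasurableSet measure_Icc_lt_top.ne
  refine measure_mono_null ?_ (ae_le_set.1 himage_ae.symm.le)
  rintro _ ⟨y, ⟨hy, hgy⟩, rfl⟩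
  refine ⟨hmono.mapsTo_Icc hy, ?_⟩
  rintro ⟨z, hz, hzy⟩
  obtain rfl := hfibre z hz y hy hzy.symm
  exact hgy.not_gt (hpos_deriv y hz).1

end

theorem stmt3_general {I J : Set ℝ} (hJ : J.OrdConnected) {s t g : ℝ → ℝ} (hs : MapsTo s I J)
    (hts : ∀ x ∈ I, t (s x) = x) (hmono : MonotoneOn t J)
    (hgloc : LocallyIntegrableOn g J volume)
    (hgdens : ∀ x ∈ J, ∀ y ∈ J, x ≤ y → t y - t x = ∫ u in x..y, g u) :
    ∀ᵐ x, x ∈ I → 0 < g (s x) := by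
  have hsmono : MonotoneOn s I := Function.monotoneOn_of_rightInvOn_of_mapsTo hmono hts hs
  refine ae_of_mem_of_ae_of_mem_inter_Ioo fun c d hc hd hcd => ?_
  have hab : s c ≤ s d := hsmono hc hd hcd.le
  have hsub : Icc (s c) (s d) ⊆ J := hJ.out (hs hc) (hs hd)
  have hg : IntervalIntegrable g volume (s c) (s d) :=
    (intervalIntegrable_iff_integrableOn_Icc_of_le hab).2
      (hgloc.integrableOn_compact_subset hsub isCompact_Icc)
  have hnull := volume_image_setOf_nonpos_eq_zero hab (hmono.mono hsub) hg
    fun y hy => hgdens _ (hs hc) y (hsub hy) hy.1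
  filter_upwards [measure_eq_zero_iff_ae_notMem.1 hnull] with x hx ⟨hxI, hxcd⟩
  contrapose! hx
  exact ⟨s x, ⟨⟨hsmono hc hxI hxcd.1.le, hsmono hxI hd hxcd.2.le⟩, hx⟩, hts x hxI⟩

/-- If the inverse `t` of the strictly increasing continuous bijection
`s : I → J` is absolutely continuous with density `g`, then `g(s(x)) > 0` for
Lebesgue-almost every `x ∈ I`. -/
theorem stmt3 (I J : Set ℝ) (hIopen : IsOpen I) (hIconn : I.OrdConnected)
    (hJopen : IsOpen J) (hJconn : J.OrdConnected)
    (s t : ℝ → ℝ) (hmono : StrictMonoOn s I) (hcont : ContinuousOn s I)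
    (hmaps : Set.MapsTo s I J) (hsurj : Set.SurjOn s I J)
    (hts : ∀ x ∈ I, t (s x) = x) (hst : ∀ y ∈ J, s (t y) = y)
    (g : ℝ → ℝ) (hgloc : LocallyIntegrableOn g J volume)
    (hgdens : ∀ x ∈ J, ∀ y ∈ J, x ≤ y → t y - t x = ∫ u in x..y, g u) :
    ∀ᵐ x ∂(volume.restrict I), 0 < g (s x) :=
  (ae_restrict_iff' hIconn.measurableSet).2 <| stmt3_general hJconn hmaps hts
    (Function.monotoneOn_of_rightInvOn_of_mapsTo hmono.monotoneOn hst
      (LeftInvOn.mapsTo hts hsurj)) hgloc hgdens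
end

section
/- Let I, J ⊆ ℝ be open intervals, s : I → J a strictly increasing continuous bijection with inverse t, and μ the Stieltjes measure of s. Suppose h : I → [0,∞) is measurable with ∫_{I'} h² dμ < ∞ for every compact I' ⊆ I, and suppose y − x = ∫_{(x,y]} h dμ for all x ≤ y in I. Then t(β) − t(α) = ∫_α^β h(t(u)) du for all α ≤ β in J (so t is absolutely continuous with density h∘t), and for every compact interval K ⊆ J one has ∫_K h(t(u))² du = ∫_{t(K)} h(x)² dμ(x) < ∞. -/
open MeasureTheory Set

open scoped Topology

/-!
The inverse `t` maps each interval `(α, β]` in `J` onto `(t α, t β]`, whose `μ`-measure is `β - α`.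
A measure finite on the half-open intervals is determined by its values there, so Lebesgue measure
on `J` is the pullback of `μ` along `t`, and `∫_{t(K)} g dμ = ∫_K g(t u) du` for every `K ⊆ J`. Both
claimed identities are instances of this substitution rule: `g = h` with `K = (α, β]`, and `g = h²`
with `K = [a, b]`.
-/

theorem strictMonoOn_of_rightInvOn_of_mapsTo {X Y : Type*} [LinearOrder X] [PartialOrder Y]
    {I : Set X} {J : Set Y} {f : X → Y} {g : Y → X} (hf : StrictMonoOn f I)
    (hgf : RightInvOn g f J) (hg : MapsTo g J I) : StrictMonoOn g J :=
  (Function.monotoneOn_of_rightInvOn_of_mapsTo hf.monotoneOn hgf hg).strictMonoOn_of_injOn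
    hgf.injOn

theorem image_Ioc_of_strictMonoOn {X Y : Type*} [LinearOrder X] [Preorder Y] {I : Set X}
    [I.OrdConnected] {f : X → Y} (hf : StrictMonoOn f I) (hfI : (f '' I).OrdConnected) {a b : X}
    (ha : a ∈ I) (hb : b ∈ I) :
    f '' Ioc a b = Ioc (f a) (f b) := by
  have hrange : (range (I.domRestrict f)).OrdConnected := by rwa [range_domRestrict]
  rw [← image_subtype_val_Ioc ⟨a, ha⟩ ⟨b, hb⟩, ← image_comp]
  exact (OrderEmbedding.ofStrictMono _ hf.domRestrict).image_Ioc hrange ⟨a, ha⟩ ⟨b, hb⟩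

theorem continuousOn_of_strictMonoOn_of_ordConnected_image {X Y : Type*} [LinearOrder X]
    [TopologicalSpace X] [OrderTopology X] [LinearOrder Y] [TopologicalSpace Y] [OrderTopology Y]
    {I : Set X} [I.OrdConnected] {f : X → Y} (hf : StrictMonoOn f I)
    (hfI : (f '' I).OrdConnected) : ContinuousOn f I := by
  have hrange : (range (I.domRestrict f)).OrdConnected := by rwa [range_domRestrict]
  exact continuousOn_iff_continuous_domRestrict.2
    (hf.domRestrict.isEmbedding_of_ordConnected hrange).continuous

theorem noMinOrder_coe_of_isOpen {X : Type*} [LinearOrder X] [TopologicalSpace X] [OrderTopology X]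
    [DenselyOrdered X] [NoMinOrder X] {I : Set X} (hI : IsOpen I) : NoMinOrder I where
  exists_lt x := by
    have hmem : I ∩ Iio x.1 ∈ 𝓝[<] x.1 :=
      Filter.inter_mem (mem_nhdsWithin_of_mem_nhds (hI.mem_nhds x.2)) self_mem_nhdsWithin
    obtain ⟨y, hyI, hyx⟩ := Filter.nonempty_of_mem hmem
    exact ⟨⟨y, hyI⟩, hyx⟩

theorem setIntegral_image_eq_setIntegral_comap {X Y E : Type*} [MeasurableSpace X]
    [MeasurableSpace Y] [NormedAddCommGroup E] [NormedSpace ℝ E] {f : X → Y}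
    (hf : MeasurableEmbedding f) (ν : Measure Y) (g : Y → E) (A : Set X) :
    ∫ y in f '' A, g y ∂ν = ∫ x in A, g (f x) ∂ν.comap f := by
  have hpres : MeasurePreserving f (ν.comap f) (ν.restrict (range f)) :=
    ⟨hf.measurable, hf.map_comap ν⟩
  rw [← hpres.setIntegral_image_emb hf,
    Measure.restrict_restrict_of_subset (image_subset_range f A)]

section Stieltjes

variable {X Y : Type*} [LinearOrder X] [TopologicalSpace X] [OrderTopology X] [MeasurableSpace X]
  [BorelSpace X] [LinearOrder Y] [TopologicalSpace Y] [OrderTopology Y] [MeasurableSpace Y]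
  [BorelSpace Y] {f : X → Y}

theorem measurableEmbedding_of_strictMono_of_ordConnected_range (hf : StrictMono f)
    (hrange : (range f).OrdConnected) : MeasurableEmbedding f :=
  (hf.isEmbedding_of_ordConnected hrange).measurableEmbedding hrange.measurableSet

variable [SecondCountableTopology X] {μ : Measure X} {ν : Measure Y}

theorem comap_eq_of_measure_Ioc_eq [NoMinOrder X] (hf : StrictMono f)
    (hrange : (range f).OrdConnected) (hfin : ∀ ⦃x y⦄, x < y → μ (Ioc x y) ≠ ⊤)
    (hμν : ∀ ⦃x y⦄, x < y → μ (Ioc x y) = ν (Ioc (f x) (f y))) : ν.comap f = μ := by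
  refine (Measure.ext_of_Ioc' _ _ hfin fun x y hxy => ?_).symm
  have himage : f '' Ioc x y = Ioc (f x) (f y) :=
    (OrderEmbedding.ofStrictMono f hf).image_Ioc hrange x y
  have hemb := measurableEmbedding_of_strictMono_of_ordConnected_range hf hrange
  rw [hemb.comap_apply, himage, hμν hxy]

theorem setIntegral_image_of_measure_Ioc_eq {E : Type*} [NormedAddCommGroup E] [NormedSpace ℝ E]
    {I A : Set X} [I.OrdConnected] [NoMinOrder I] (hf : StrictMonoOn f I)
    (hfI : (f '' I).OrdConnected) (hfin : ∀ x ∈ I, ∀ y ∈ I, x < y → μ (Ioc x y) ≠ ⊤)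
    (hμν : ∀ x ∈ I, ∀ y ∈ I, x < y → μ (Ioc x y) = ν (Ioc (f x) (f y))) (hA : A ⊆ I)
    (g : Y → E) : ∫ y in f '' A, g y ∂ν = ∫ x in A, g (f x) ∂μ := by
  have hrange : (range (I.domRestrict f)).OrdConnected := by rwa [range_domRestrict]
  have hemb := measurableEmbedding_of_strictMono_of_ordConnected_range hf.domRestrict hrange
  have hcoe : MeasurableEmbedding ((↑) : I → X) := .subtype_coe (‹I.OrdConnected›.measurableSet)
  have hIoc (x y : I) : μ.comap (↑) (Ioc x y) = μ (Ioc x.1 y.1) := by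
    rw [hcoe.comap_apply, image_subtype_val_Ioc]
  have hcomap : ν.comap (I.domRestrict f) = μ.comap (↑) := by
    refine comap_eq_of_measure_Ioc_eq hf.domRestrict hrange (fun x y hxy => ?_) fun x y hxy => ?_
    · exact hIoc x y ▸ hfin x x.2 y y.2 hxy
    · exact (hIoc x y).trans (hμν x x.2 y y.2 hxy)
  obtain ⟨B, rfl⟩ : ∃ B : Set I, (↑) '' B = A := ⟨_, Subtype.coe_image_of_subset hA⟩
  rw [← image_comp]
  calc ∫ y in I.domRestrict f '' B, g y ∂ν
    _ = ∫ x in B, g (f x) ∂ν.comap (I.domRestrict f) :=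
      setIntegral_image_eq_setIntegral_comap hemb ν g B
    _ = ∫ x in B, g (f x) ∂μ.comap (↑) := by rw [hcomap]
    _ = ∫ x in (↑) '' B, g (f x) ∂μ :=
      (setIntegral_image_eq_setIntegral_comap hcoe μ (fun x => g (f x)) B).symm

end Stieltjes

/-- If `h ≥ 0` is measurable with `∫_{I'} h² dμ < ∞` for all compact `I' ⊆ I`
and `y − x = ∫_{(x,y]} h dμ` for all `x ≤ y` in `I`, then the inverse `t` of `s` is absolutely
continuous on `J` with density `h∘t`, and for every compact interval `K ⊆ J`,
`∫_K (h∘t)² dλ = ∫_{t(K)} h² dμ < ∞`. -/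
theorem stmt4 (I J : Set ℝ) (hIopen : IsOpen I) (hIconn : I.OrdConnected)
    (hJopen : IsOpen J) (hJconn : J.OrdConnected)
    (s t : ℝ → ℝ) (hmono : StrictMonoOn s I) (hcont : ContinuousOn s I)
    (hmaps : Set.MapsTo s I J) (hsurj : Set.SurjOn s I J)
    (hts : ∀ x ∈ I, t (s x) = x) (hst : ∀ y ∈ J, s (t y) = y)
    (μ : Measure ℝ) (hμI : μ Iᶜ = 0)
    (hμ : ∀ x ∈ I, ∀ y ∈ I, x ≤ y → μ (Set.Ioc x y) = ENNReal.ofReal (s y - s x))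
    (h : ℝ → ℝ) (hmeas : Measurable h) (hpos : ∀ x, 0 ≤ h x)
    (hsq : ∀ I' ⊆ I, IsCompact I' → ∫⁻ x in I', ENNReal.ofReal ((h x) ^ 2) ∂μ < ⊤)
    (hrep : ∀ x ∈ I, ∀ y ∈ I, x ≤ y → y - x = ∫ u in Set.Ioc x y, h u ∂μ) :
    (∀ α ∈ J, ∀ β ∈ J, α ≤ β → t β - t α = ∫ u in α..β, h (t u)) ∧
    (∀ a b : ℝ, Set.Icc a b ⊆ J →
      IntegrableOn (fun x => (h x) ^ 2) (t '' Set.Icc a b) μ ∧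
      ∫ u in Set.Icc a b, (h (t u)) ^ 2 = ∫ x in t '' Set.Icc a b, (h x) ^ 2 ∂μ) := by
  obtain rfl : t '' J = I :=
    (LeftInvOn.surjOn hts hmaps).image_eq_of_mapsTo (LeftInvOn.mapsTo hts hsurj)
  have htmem : MapsTo t J (t '' J) := mapsTo_image t J
  have htmono : StrictMonoOn t J := strictMonoOn_of_rightInvOn_of_mapsTo hmono hst htmem
  have hIoc : ∀ α ∈ J, ∀ β ∈ J, α < β → volume (Ioc α β) = μ (Ioc (t α) (t β)) := by
    intro α hα β hβ hαβ
    rw [Real.volume_Ioc, hμ _ (htmem hα) _ (htmem hβ) (htmono hα hβ hαβ).le, hst α hα, hst β hβ]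
  have := noMinOrder_coe_of_isOpen hJopen
  have hsubst {K : Set ℝ} (hK : K ⊆ J) (g : ℝ → ℝ) :
      ∫ x in t '' K, g x ∂μ = ∫ u in K, g (t u) :=
    setIntegral_image_of_measure_Ioc_eq htmono hIconn (fun _ _ _ _ _ => measure_Ioc_lt_top.ne)
      hIoc hK g
  refine ⟨fun α hα β hβ hαβ => ?_, fun a b hab => ⟨?_, (hsubst hab fun x => h x ^ 2).symm⟩⟩
  · rw [hrep _ (htmem hα) _ (htmem hβ) (htmono.monotoneOn hα hβ hαβ),
      intervalIntegral.integral_of_le hαβ, ← image_Ioc_of_strictMonoOn htmono hIconn hα hβ,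
      hsubst (Ioc_subset_Icc_self.trans (hJconn.out hα hβ))]
  · have htcont : ContinuousOn t J :=
      continuousOn_of_strictMonoOn_of_ordConnected_image htmono hIconn
    have hcompact : IsCompact (t '' Icc a b) :=
      isCompact_Icc.image_of_continuousOn (htcont.mono hab)
    exact (lintegral_ofReal_ne_top_iff_integrable (hmeas.pow_const 2).aestronglyMeasurable
      (.of_forall fun x => sq_nonneg (h x))).1 (hsq _ (image_mono hab) hcompact).ne
end

section
/- Let K ⊆ [0,1] be a compact set with empty interior and positive Lebesgue measure, and define t(x) := ∫_0^x dist(u, K) du for x ∈ ℝ. Then the image t(K) has Lebesgue measure zero; consequently, the inverse function s := t⁻¹ : ℝ → ℝ of the strictly increasing bijection t is not absolutely continuous, i.e., there is no locally integrable function g : ℝ → ℝ with s(y) − s(x) = ∫_x^y g(u) du for all x ≤ y. -/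
open MeasureTheory Set

/-!
The primitive `t` of `dist(·, K)` has derivative `dist(x, K) = 0` at every `x ∈ K`, so `t` maps `K`
to a null set by the one-dimensional Sard lemma. A primitive `s` of a locally integrable `g`
satisfies `λ(s(E)) ≤ ∫_E |g|`: this holds for intervals, hence for open sets, hence by outer
regularity for every `E`. So `s` maps null sets to null sets (Lusin's property (N)), whereas an
inverse of `t` maps the null set `t(K)` onto `K`, which has positive measure.
-/

section OrdConnected

variable {α : Type*} [LinearOrder α] [TopologicalSpace α] [OrderTopology α]

theorem isOpen_ordConnectedComponent {U : Set α} (hU : IsOpen U) (x : α) :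
    IsOpen (U.ordConnectedComponent x) := by
  refine isOpen_iff_mem_nhds.2 fun y hy => ?_
  rw [ordConnectedComponent_eq hy, ordConnectedComponent_mem_nhds]
  exact hU.mem_nhds (hy right_mem_uIcc)

variable [TopologicalSpace.SeparableSpace α]

theorem exists_countable_pairwiseDisjoint_ordConnected_sUnion_eq {U : Set α} (hU : IsOpen U) :
    ∃ C : Set (Set α), C.Countable ∧ C.PairwiseDisjoint id ∧
      (∀ I ∈ C, IsOpen I ∧ I.OrdConnected) ∧ ⋃₀ C = U := by
  have hdisj : (U.ordConnectedComponent '' U).PairwiseDisjoint id := by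
    rintro _ ⟨x, -, rfl⟩ _ ⟨y, -, rfl⟩ hne
    refine disjoint_left.2 fun z hxz hyz => hne ?_
    exact (ordConnectedComponent_eq hxz).trans (ordConnectedComponent_eq hyz).symm
  have hopen : ∀ I ∈ U.ordConnectedComponent '' U, IsOpen I :=
    forall_mem_image.2 fun x _ => isOpen_ordConnectedComponent hU x
  refine ⟨_, hdisj.countable_of_isOpen hopen ?_, hdisj, fun I hI => ⟨hopen I hI, ?_⟩, ?_⟩
  · exact forall_mem_image.2 fun x hx => nonempty_ordConnectedComponent.2 hx
  · obtain ⟨x, -, rfl⟩ := hI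
    infer_instance
  · refine (sUnion_subset ?_).antisymm fun x hx => ?_
    · exact forall_mem_image.2 fun x _ => ordConnectedComponent_subset
    · exact ⟨_, mem_image_of_mem _ hx, self_mem_ordConnectedComponent.2 hx⟩

end OrdConnected

section EDistLeMeasure

variable {α : Type*} [LinearOrder α] [MeasurableSpace α] {μ : Measure α} {f : α → ℝ}

theorem volume_image_le_measure_of_ordConnected
    (h : ∀ x y, x ≤ y → edist (f x) (f y) ≤ μ (Ioc x y)) {I : Set α} (hI : I.OrdConnected) :
    volume (f '' I) ≤ μ I := by
  have hle : ∀ x ∈ I, ∀ y ∈ I, x ≤ y → edist (f x) (f y) ≤ μ I := fun x hx y hy hxy =>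
    (h x y hxy).trans (measure_mono (Ioc_subset_Icc_self.trans (hI.out hx hy)))
  refine (Real.volume_le_diam _).trans (Metric.ediam_le ?_)
  rintro _ ⟨x, hx, rfl⟩ _ ⟨y, hy, rfl⟩
  rcases le_total x y with hxy | hyx
  · exact hle x hx y hy hxy
  · exact edist_comm (f x) (f y) ▸ hle y hy x hx hyx

variable [TopologicalSpace α] [OrderTopology α] [TopologicalSpace.SeparableSpace α]
  [OpensMeasurableSpace α]

theorem volume_image_le_measure_of_isOpen
    (h : ∀ x y, x ≤ y → edist (f x) (f y) ≤ μ (Ioc x y)) {U : Set α} (hU : IsOpen U) :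
    volume (f '' U) ≤ μ U := by
  obtain ⟨C, hcount, hdisj, hC, rfl⟩ :=
    exists_countable_pairwiseDisjoint_ordConnected_sUnion_eq hU
  have := hcount.to_subtype
  calc volume (f '' ⋃₀ C)
      = volume (⋃ I : C, f '' I) := by rw [sUnion_eq_iUnion, image_iUnion]
    _ ≤ ∑' I : C, volume (f '' I) := measure_iUnion_le _
    _ ≤ ∑' I : C, μ I :=
      ENNReal.tsum_le_tsum fun I => volume_image_le_measure_of_ordConnected h (hC I I.2).2
    _ = μ (⋃₀ C) := (measure_sUnion hcount hdisj fun I hI => (hC I hI).1.measurableSet).symm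

theorem volume_image_le_measure [μ.OuterRegular]
    (h : ∀ x y, x ≤ y → edist (f x) (f y) ≤ μ (Ioc x y)) (E : Set α) :
    volume (f '' E) ≤ μ E := by
  rw [E.measure_eq_iInf_isOpen μ]
  refine le_iInf₂ fun U hEU => le_iInf fun hU => ?_
  exact (measure_mono (image_mono hEU)).trans (volume_image_le_measure_of_isOpen h hU)

end EDistLeMeasure

theorem isLocallyFiniteMeasure_withDensity_enorm {X E : Type*} [TopologicalSpace X]
    [MeasurableSpace X] [OpensMeasurableSpace X] [NormedAddCommGroup E] {μ : Measure X}
    {g : X → E} (hg : LocallyIntegrable g μ) :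
    IsLocallyFiniteMeasure (μ.withDensity fun x => ‖g x‖ₑ) where
  finiteAtNhds x := by
    obtain ⟨V, hV, hgV⟩ := hg x
    obtain ⟨U, hUV, hU, hxU⟩ := mem_nhds_iff.1 hV
    refine ⟨U, hU.mem_nhds hxU, ?_⟩
    rw [withDensity_apply _ hU.measurableSet]
    exact (hgV.mono_set hUV).2

section Primitive

variable {s g : ℝ → ℝ}

theorem volume_image_le_setLIntegral_enorm (hg : LocallyIntegrable g volume)
    (hsg : ∀ x y, x ≤ y → s y - s x = ∫ u in x..y, g u) (E : Set ℝ) :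
    volume (s '' E) ≤ ∫⁻ u in E, ‖g u‖ₑ := by
  have := isLocallyFiniteMeasure_withDensity_enorm hg
  rw [← withDensity_apply' (fun u => ‖g u‖ₑ) E]
  refine volume_image_le_measure (fun x y hxy => ?_) E
  calc edist (s x) (s y)
      = ‖∫ u in Ioc x y, g u‖ₑ := by
        rw [edist_comm, edist_eq_enorm_sub, hsg x y hxy, intervalIntegral.integral_of_le hxy]
    _ ≤ ∫⁻ u in Ioc x y, ‖g u‖ₑ := enorm_integral_le_lintegral_enorm _
    _ = volume.withDensity (fun u => ‖g u‖ₑ) (Ioc x y) :=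
        (withDensity_apply _ measurableSet_Ioc).symm

theorem volume_image_eq_zero_of_sub_eq_integral (hg : LocallyIntegrable g volume)
    (hsg : ∀ x y, x ≤ y → s y - s x = ∫ u in x..y, g u) {E : Set ℝ} (hE : volume E = 0) :
    volume (s '' E) = 0 :=
  nonpos_iff_eq_zero.1 <|
    (volume_image_le_setLIntegral_enorm hg hsg E).trans_eq (setLIntegral_measure_zero E _ hE)

end Primitive

theorem volume_image_eq_zero_of_hasDerivWithinAt_zero {f : ℝ → ℝ} {K : Set ℝ}
    (hf : ∀ x ∈ K, HasDerivWithinAt f 0 K x) : volume (f '' K) = 0 :=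
  addHaar_image_eq_zero_of_det_fderivWithin_eq_zero volume
    (fun x hx => (hf x hx).hasFDerivWithinAt) fun _ _ => by simp [ContinuousLinearMap.det]

theorem volume_image_primitive_eq_zero {f : ℝ → ℝ} (hf : Continuous f) (a : ℝ) {K : Set ℝ}
    (hfK : EqOn f 0 K) : volume ((fun x => ∫ u in a..x, f u) '' K) = 0 :=
  volume_image_eq_zero_of_hasDerivWithinAt_zero fun x hx => by
    have hderiv := (hf.integral_hasStrictDerivAt a x).hasDerivAt
    rw [hfK hx] at hderiv
    exact hderiv.hasDerivWithinAt

theorem stmt9_general {f : ℝ → ℝ} (hf : Continuous f) {K : Set ℝ} (hfK : EqOn f 0 K) :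
    volume ((fun x => ∫ u in (0:ℝ)..x, f u) '' K) = 0 ∧
    (0 < volume K → ∀ s : ℝ → ℝ, LeftInvOn s (fun x => ∫ u in (0:ℝ)..x, f u) K →
      ¬ ∃ g : ℝ → ℝ, LocallyIntegrable g volume ∧
        ∀ x y : ℝ, x ≤ y → s y - s x = ∫ u in x..y, g u) := by
  have himage := volume_image_primitive_eq_zero hf 0 hfK
  refine ⟨himage, ?_⟩
  rintro hKpos s hs ⟨g, hg, hsg⟩
  have hK := volume_image_eq_zero_of_sub_eq_integral hg hsg himage
  rw [hs.image_image] at hK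
  exact hKpos.ne' hK

/-- For a compact `K ⊆ [0,1]` with empty interior and positive Lebesgue measure
and `t(x) := ∫_0^x dist(u,K) du`, the image `t(K)` has Lebesgue measure zero; consequently
the inverse `s = t⁻¹` of the strictly increasing bijection `t` is not absolutely continuous:
there is no locally integrable `g` with `s(y) − s(x) = ∫_x^y g(u) du` for all `x ≤ y`. -/
theorem stmt9 (K : Set ℝ) (hK : IsCompact K) (hKsub : K ⊆ Set.Icc 0 1)
    (hKint : interior K = ∅) (hKpos : 0 < volume K) :
    volume ((fun x => ∫ u in (0:ℝ)..x, Metric.infDist u K) '' K) = 0 ∧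
    ∀ s : ℝ → ℝ, (∀ x : ℝ, s (∫ u in (0:ℝ)..x, Metric.infDist u K) = x) →
      ¬ ∃ g : ℝ → ℝ, LocallyIntegrable g volume ∧
        ∀ x y : ℝ, x ≤ y → s y - s x = ∫ u in x..y, g u := by
  have h := stmt9_general (Metric.continuous_infDist_pt K) fun _ => Metric.infDist_zero_of_mem
  exact ⟨h.1, fun s hs => h.2 hKpos s fun x _ => hs x⟩
end

section
/- Let Z ⊆ ℝ be a measurable set with λ(Z) > 0 such that λ((a,b) ∖ Z) > 0 for every a < b. Then there is no function F : ℝ → ℝ of locally bounded variation such that F(x) = 1 for almost every x ∈ ℝ ∖ Z and F(x) = 0 for almost every x ∈ Z; in other words, no locally bounded variation function agrees almost everywhere with the indicator function of ℝ ∖ Z. -/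
open MeasureTheory Set

/-!
A function of locally bounded variation is a difference of two monotone functions, so its
discontinuities are countable and hence null. If it equals `1` almost everywhere outside `Z`, it
takes the value `1` arbitrarily near every point, so it equals `1` at each of its continuity points;
almost every point of `Z` is one of these, but there the function should vanish.
-/

open Filter Measure Topology

theorem isOpenPosMeasure_of_measure_Ioo_ne_zero {α : Type*} [TopologicalSpace α] [LinearOrder α]
    [OrderTopology α] [NoMinOrder α] [NoMaxOrder α] [MeasurableSpace α] {μ : Measure α}
    (hμ : ∀ a b : α, a < b → μ (Ioo a b) ≠ 0) : IsOpenPosMeasure μ where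
  open_pos := by
    rintro U hU ⟨x, hx⟩
    obtain ⟨a, b, ⟨hax, hxb⟩, habU⟩ := mem_nhds_iff_exists_Ioo_subset.1 (hU.mem_nhds hx)
    exact (measure_pos_of_superset habU (hμ a b (hax.trans hxb))).ne'

theorem isOpenPosMeasure_restrict_compl_of_measure_Ioo_diff_pos {α : Type*} [TopologicalSpace α]
    [LinearOrder α] [OrderTopology α] [NoMinOrder α] [NoMaxOrder α] [MeasurableSpace α]
    {μ : Measure α} {Z : Set α} (hZ : ∀ a b : α, a < b → 0 < μ (Ioo a b \ Z)) :
    IsOpenPosMeasure (μ.restrict Zᶜ) :=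
  isOpenPosMeasure_of_measure_Ioo_ne_zero fun a b hab ↦
    ((hZ a b hab).trans_le (le_restrict_apply Zᶜ (Ioo a b))).ne'

theorem countable_not_continuousAt_of_locallyBoundedVariationOn {α : Type*} [TopologicalSpace α]
    [LinearOrder α] [OrderTopology α] {F : α → ℝ} (hF : LocallyBoundedVariationOn F univ) :
    {x | ¬ContinuousAt F x}.Countable := by
  obtain ⟨p, q, hp, hq, rfl⟩ := hF.exists_monotoneOn_sub_monotoneOn
  rw [monotoneOn_univ] at hp hq
  refine (hp.countable_not_continuousAt.union hq.countable_not_continuousAt).mono fun x hx ↦ ?_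
  by_contra hpq
  simp only [mem_union, mem_ofPred_eq, not_or, not_not] at hpq
  exact hx (hpq.1.sub hpq.2)

theorem ae_continuousAt_of_boundedVariationOn_Icc {α : Type*} [TopologicalSpace α] [LinearOrder α]
    [OrderTopology α] [MeasurableSpace α] {μ : Measure α} [NullSingletonClass μ] {F : α → ℝ}
    (hF : ∀ a b : α, BoundedVariationOn F (Icc a b)) : ∀ᵐ x ∂μ, ContinuousAt F x :=
  (countable_not_continuousAt_of_locallyBoundedVariationOn
    fun a b _ _ ↦ (hF a b).mono inter_subset_right).measure_zero μ

section AlmostEverywhereConstant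

variable {X Y : Type*} [TopologicalSpace X] [MeasurableSpace X] [TopologicalSpace Y] [T1Space Y]
  {μ : Measure X} {c d : Y}

theorem eq_of_continuousAt_of_ae_eq_const [IsOpenPosMeasure μ] {F : X → Y} {x : X}
    (hFd : ∀ᵐ y ∂μ, F y = d) (hF : ContinuousAt F x) : F x = d := by
  by_contra hne
  have hfreq : ∃ᶠ y in 𝓝 x, F y = d := mem_closure_iff_frequently.1 (dense_of_ae hFd x)
  exact hfreq (hF.eventually_ne hne)

theorem stmt10_general {Z : Set X} (hZ : μ Z ≠ 0) (hZc : IsOpenPosMeasure (μ.restrict Zᶜ))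
    (hcd : c ≠ d) :
    ¬ ∃ F : X → Y, (∀ᵐ x ∂μ, ContinuousAt F x) ∧
      (∀ᵐ x ∂(μ.restrict Zᶜ), F x = d) ∧
      (∀ᵐ x ∂(μ.restrict Z), F x = c) := by
  rintro ⟨F, hF, hFd, hFc⟩
  obtain ⟨x, hxZ, hx, hxc⟩ :=
    ((frequently_ae_mem_iff.2 hZ).and_eventually (hF.and (ae_imp_of_ae_restrict hFc))).exists
  exact hcd ((hxc hxZ).symm.trans (eq_of_continuousAt_of_ae_eq_const hFd hx))

end AlmostEverywhereConstant

/-- If `Z ⊆ ℝ` is measurable with positive Lebesgue measure and the complement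
of `Z` has positive measure in every nonempty open interval, then no function of locally
bounded variation agrees almost everywhere with the indicator of `ℝ ∖ Z` (i.e. equals `1`
a.e. on `ℝ ∖ Z` and `0` a.e. on `Z`). -/
theorem stmt10 (Z : Set ℝ) (hZm : MeasurableSet Z) (hZpos : 0 < volume Z)
    (hdense : ∀ a b : ℝ, a < b → 0 < volume (Set.Ioo a b \ Z)) :
    ¬ ∃ F : ℝ → ℝ, (∀ a b : ℝ, BoundedVariationOn F (Set.Icc a b)) ∧
      (∀ᵐ x ∂(volume.restrict Zᶜ), F x = 1) ∧
      (∀ᵐ x ∂(volume.restrict Z), F x = 0) := by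
  rintro ⟨F, hbv, hone, hzero⟩
  exact stmt10_general hZpos.ne' (isOpenPosMeasure_restrict_compl_of_measure_Ioo_diff_pos hdense)
    zero_ne_one ⟨F, ae_continuousAt_of_boundedVariationOn_Icc hbv, hone, hzero⟩
end

section
/- Let c : ℝ → ℝ be a nondecreasing, continuous, bounded function whose Stieltjes measure ν (determined by ν((x,y]) = c(y) − c(x)) is mutually singular with Lebesgue measure λ. Set s(x) := x + c(x), so that s : ℝ → ℝ is a strictly increasing continuous bijection, and let t := s⁻¹. Then t is 1-Lipschitz; t is absolutely continuous with a density g taking only the values 0 and 1 almost everywhere; and λ({y ∈ ℝ : g(y) = 0}) = ν(ℝ) for any such density g. -/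
open MeasureTheory Set

/-!
The inverse `t` of `s = id + c` pulls `(a, b]` back to `(s a, s b]`, so it pushes Lebesgue measure
`λ` forward to `λ + ν`. Let `S` be a set that carries `λ` and is null for `ν`. Then `λ + ν`
restricts on `S` to `λ`, which makes the indicator of `t⁻¹ S` a density of `t`, and on the
complement of `S` to `ν`, which gives the zero set `t⁻¹ Sᶜ` of this density the Lebesgue measure
`ν(ℝ)`. A density is almost everywhere the derivative of `t`, so every other density has the same
zero set up to a null set.
-/

section HasDensity

variable {E : Type*} [NormedAddCommGroup E] [NormedSpace ℝ E]

/-- `HasDensity f g` says that `f` is absolutely continuous on `ℝ` with density `g`: it is an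
indefinite integral of the locally integrable function `g`. Only intervals with `x ≤ y` are
mentioned; the others follow by reversing the orientation. -/
def HasDensity (f g : ℝ → E) : Prop :=
  LocallyIntegrable g volume ∧ ∀ x y : ℝ, x ≤ y → f y - f x = ∫ u in x..y, g u

namespace HasDensity

variable {f g g₁ g₂ : ℝ → E}

theorem sub_eq_integral (hg : HasDensity f g) (x y : ℝ) : f y - f x = ∫ u in x..y, g u := by
  rcases le_total x y with hxy | hyx
  · exact hg.2 x y hxy
  · rw [intervalIntegral.integral_symm, ← hg.2 y x hyx, neg_sub]

theorem ae_hasDerivAt [CompleteSpace E] (hg : HasDensity f g) :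
    ∀ᵐ x, HasDerivAt f (g x) x := by
  filter_upwards [LocallyIntegrable.ae_hasDerivAt_integral hg.1] with x hx
  have hderiv : HasDerivAt (fun y => f y - f 0) (g x) x := by
    simpa only [hg.sub_eq_integral] using hx 0
  exact (hasDerivAt_sub_const_iff (f 0)).1 hderiv

theorem ae_eq [CompleteSpace E] (h₁ : HasDensity f g₁) (h₂ : HasDensity f g₂) :
    g₁ =ᵐ[volume] g₂ := by
  filter_upwards [h₁.ae_hasDerivAt, h₂.ae_hasDerivAt] with x hx₁ hx₂
  exact hx₁.unique hx₂

end HasDensity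

end HasDensity

theorem strictMono_of_rightInverse {α β : Type*} [LinearOrder α] [Preorder β] {s : α → β}
    {t : β → α} (hs : StrictMono s) (hst : Function.RightInverse t s) : StrictMono t :=
  (hs.orderIsoOfRightInverse s t hst).symm.strictMono

theorem preimage_Ioc_of_rightInverse {α β : Type*} [LinearOrder α] [Preorder β] {s : α → β}
    {t : β → α} (hs : StrictMono s) (hst : Function.RightInverse t s) (a b : α) :
    t ⁻¹' Ioc a b = Ioc (s a) (s b) :=
  (hs.orderIsoOfRightInverse s t hst).symm.preimage_Ioc a b

theorem antilipschitzWith_one_id_add {c : ℝ → ℝ} (hc : Monotone c) :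
    AntilipschitzWith 1 fun x => x + c x := by
  refine AntilipschitzWith.of_le_mul_dist fun x y => ?_
  wlog hxy : x ≤ y generalizing x y
  · simpa only [dist_comm] using this y x (le_of_not_ge hxy)
  rw [NNReal.coe_one, one_mul, dist_comm x, dist_comm (x + c x), Real.dist_eq, Real.dist_eq,
    abs_of_nonneg (sub_nonneg.2 hxy)]
  calc y - x ≤ y + c y - (x + c x) := by linarith [hc hxy]
    _ ≤ |y + c y - (x + c x)| := le_abs_self _

theorem map_volume_eq_volume_add {c t : ℝ → ℝ} {ν : Measure ℝ} (hc : Monotone c)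
    (hν : ∀ x y : ℝ, x ≤ y → ν (Ioc x y) = ENNReal.ofReal (c y - c x))
    (hst : Function.RightInverse t fun x => x + c x) :
    volume.map t = volume + ν := by
  have hs : StrictMono fun x => x + c x := strictMono_id.add_monotone hc
  have ht : Measurable t := (strictMono_of_rightInverse hs hst).monotone.measurable
  have hIoc (a b : ℝ) :
      volume.map t (Ioc a b) = ENNReal.ofReal (b + c b - (a + c a)) := by
    rw [Measure.map_apply ht measurableSet_Ioc, preimage_Ioc_of_rightInverse hs hst,
      Real.volume_Ioc]
  refine Measure.ext_of_Ioc' _ _ (fun a b _ => hIoc a b ▸ ENNReal.ofReal_ne_top) fun a b hab => ?_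
  rw [hIoc, Measure.add_apply, hν a b hab.le, Real.volume_Ioc, add_sub_add_comm,
    ENNReal.ofReal_add (sub_nonneg.2 hab.le) (sub_nonneg.2 (hc hab.le))]

theorem add_apply_inter_of_measure_eq_zero {α : Type*} [MeasurableSpace α] {μ ν : Measure α}
    {S : Set α} (hμS : μ Sᶜ = 0) (hνS : ν S = 0) (A : Set α) : (μ + ν) (A ∩ S) = μ A := by
  rw [Measure.add_apply, measure_inter_conull hμS, measure_mono_null inter_subset_right hνS,
    add_zero]

section Pushforward

variable {t : ℝ → ℝ} {ν : Measure ℝ} {S : Set ℝ}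

theorem hasDensity_indicator_preimage (ht : StrictMono t) (hmap : volume.map t = volume + ν)
    (hS : MeasurableSet S) (hνS : ν S = 0) (hSc : volume Sᶜ = 0) :
    HasDensity t ((t ⁻¹' S).indicator 1) := by
  have hmeas : Measurable t := ht.monotone.measurable
  refine ⟨(locallyIntegrable_const 1).indicator (hmeas hS), fun x y hxy => ?_⟩
  have hpre : Ioc x y = t ⁻¹' Ioc (t x) (t y) :=
    ((OrderEmbedding.ofStrictMono t ht).preimage_Ioc x y).symm
  have hvol : volume (Ioc x y ∩ t ⁻¹' S) = ENNReal.ofReal (t y - t x) := by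
    rw [hpre, ← preimage_inter, ← Measure.map_apply hmeas (measurableSet_Ioc.inter hS), hmap,
      add_apply_inter_of_measure_eq_zero hSc hνS, Real.volume_Ioc]
  calc t y - t x = volume.real (Ioc x y ∩ t ⁻¹' S) := by
        rw [measureReal_def, hvol, ENNReal.toReal_ofReal (sub_nonneg.2 (ht.monotone hxy))]
    _ = ∫ u in x..y, (t ⁻¹' S).indicator 1 u := by
        rw [intervalIntegral.integral_of_le hxy, integral_indicator_one (hmeas hS),
          measureReal_restrict_apply (hmeas hS), inter_comm]

theorem exists_hasDensity_ae_eq_zero_or_one (ht : StrictMono t)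
    (hmap : volume.map t = volume + ν) (hsing : ν.MutuallySingular volume) :
    ∃ g : ℝ → ℝ, HasDensity t g ∧ ∀ᵐ y, g y = 0 ∨ g y = 1 := by
  obtain ⟨S, hS, hνS, hSc⟩ := hsing
  exact ⟨_, hasDensity_indicator_preimage ht hmap hS hνS hSc,
    ae_of_all _ fun y => indicator_eq_zero_or_self _ 1 y⟩

theorem HasDensity.volume_setOf_eq_zero {g : ℝ → ℝ} (hg : HasDensity t g) (ht : StrictMono t)
    (hmap : volume.map t = volume + ν) (hsing : ν.MutuallySingular volume) :
    volume {y | g y = 0} = ν univ := by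
  obtain ⟨S, hS, hνS, hSc⟩ := hsing
  have hzero : {y | g y = 0} =ᵐ[volume] t ⁻¹' Sᶜ := by
    refine Filter.eventuallyEq_set.2 ?_
    filter_upwards [hg.ae_eq (hasDensity_indicator_preimage ht hmap hS hνS hSc)] with y hy
    simp [hy]
  calc volume {y | g y = 0} = volume (t ⁻¹' Sᶜ) := measure_congr hzero
    _ = (ν + volume : Measure ℝ) (univ ∩ Sᶜ) := by
        rw [← Measure.map_apply ht.monotone.measurable hS.compl, hmap, add_comm, univ_inter]
    _ = ν univ := add_apply_inter_of_measure_eq_zero (by rwa [compl_compl]) hSc univ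

end Pushforward

theorem stmt11_general {c t : ℝ → ℝ} {ν : Measure ℝ} (hmono : Monotone c)
    (hν : ∀ x y : ℝ, x ≤ y → ν (Ioc x y) = ENNReal.ofReal (c y - c x))
    (hsing : ν.MutuallySingular volume) (hst : ∀ y : ℝ, t y + c (t y) = y) :
    LipschitzWith 1 t ∧
    (∃ g : ℝ → ℝ, HasDensity t g ∧ ∀ᵐ y : ℝ, g y = 0 ∨ g y = 1) ∧
    (∀ g : ℝ → ℝ, HasDensity t g → volume {y : ℝ | g y = 0} = ν univ) := by
  have ht : StrictMono t := strictMono_of_rightInverse (strictMono_id.add_monotone hmono) hst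
  have hmap : volume.map t = volume + ν := map_volume_eq_volume_add hmono hν hst
  exact ⟨(antilipschitzWith_one_id_add hmono).to_rightInverse hst,
    exists_hasDensity_ae_eq_zero_or_one ht hmap hsing,
    fun _ hg => hg.volume_setOf_eq_zero ht hmap hsing⟩

/-- Let `c` be nondecreasing, continuous and bounded with Stieltjes measure `ν`
singular with respect to Lebesgue measure, `s(x) = x + c(x)` and `t = s⁻¹`. Then `t` is
1-Lipschitz; `t` is absolutely continuous with a density taking only the values 0 and 1
almost everywhere; and `λ({g = 0}) = ν(ℝ)` for any density `g` of `t`. -/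
theorem stmt11 (c : ℝ → ℝ) (hmono : Monotone c) (hcont : Continuous c)
    (hbdd : ∃ M : ℝ, ∀ x, |c x| ≤ M)
    (ν : Measure ℝ)
    (hν : ∀ x y : ℝ, x ≤ y → ν (Set.Ioc x y) = ENNReal.ofReal (c y - c x))
    (hsing : ν.MutuallySingular volume)
    (t : ℝ → ℝ) (hts : ∀ x : ℝ, t (x + c x) = x) (hst : ∀ y : ℝ, t y + c (t y) = y) :
    LipschitzWith 1 t ∧
    (∃ g : ℝ → ℝ, LocallyIntegrable g volume ∧
      (∀ x y : ℝ, x ≤ y → t y - t x = ∫ u in x..y, g u) ∧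
      (∀ᵐ y : ℝ, g y = 0 ∨ g y = 1)) ∧
    (∀ g : ℝ → ℝ, LocallyIntegrable g volume →
      (∀ x y : ℝ, x ≤ y → t y - t x = ∫ u in x..y, g u) →
      volume {y : ℝ | g y = 0} = ν Set.univ) := by
  simpa only [HasDensity, and_assoc, and_imp] using stmt11_general hmono hν hsing hst
end

section
/- Let c : ℝ → ℝ be a nondecreasing, continuous, bounded, non-constant function whose Stieltjes measure ν is mutually singular with Lebesgue measure λ, set s(x) := x + c(x) and t := s⁻¹. Then no density g of the absolutely continuous function t (i.e., no locally integrable g with t(y) − t(x) = ∫_x^y g(u) du for all x ≤ y) agrees Lebesgue-almost everywhere with a function of locally bounded variation on ℝ. -/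
open MeasureTheory Set

/-!
Since `c` has derivative `0` almost everywhere, `x ↦ x + c x` has derivative `1` on a dense set,
hence so does its inverse `t`. If a density of `t` had a version `F` with right limits, `t` would
have right derivative `F (x+)` at every `x`. The function `x ↦ F (x+)` is right-continuous and
equals `1` on a dense set, so it is identically `1` and `t` is a translation, which forces `c` to
be constant.
-/

open Filter Topology Function

lemma rightLim_eq_of_dense {α β : Type*} [LinearOrder α] [TopologicalSpace α] [OrderTopology α]
    [DenselyOrdered α] [NoMaxOrder α] [TopologicalSpace β] [T3Space β] {f : α → β} {l : β}
    (hf : ∀ x, ∃ y, Tendsto f (𝓝[>] x) (𝓝 y)) (hl : Dense {x | f.rightLim x = l}) (x : α) :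
    f.rightLim x = l := by
  have hcont : Tendsto f.rightLim (𝓝[>] x) (𝓝 (f.rightLim x)) :=
    (continuousWithinAt_rightLim_Ici (tendsto_rightLim_of_tendsto (hf x))).mono Ioi_subset_Ici_self
  have hfreq : ∃ᶠ z in 𝓝[>] x, f.rightLim z ∈ ({l} : Set β) := by
    refine frequently_iff.2 fun {U} hU => ?_
    obtain ⟨r, hr, hrU⟩ := mem_nhdsGT_iff_exists_Ioo_subset.1 hU
    obtain ⟨z, hz, hzr⟩ := hl.exists_between hr
    exact ⟨z, hrU hzr, hz⟩
  exact isClosed_singleton.mem_of_frequently_of_tendsto hfreq hcont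

section Density

variable {E : Type*} [NormedAddCommGroup E] [NormedSpace ℝ E] {f g F : ℝ → E} {l : E}

/-- `f` is absolutely continuous with density `g`, that is, a primitive of the locally integrable
function `g`. The increments are prescribed only for `x ≤ y`, the reverse order being a consequence
(see `HasLebesgueDensity.eq_add_integral`). -/
structure HasLebesgueDensity (f g : ℝ → E) : Prop where
  locallyIntegrable : LocallyIntegrable g volume
  sub_eq_integral_of_le : ∀ x y : ℝ, x ≤ y → f y - f x = ∫ u in x..y, g u

namespace HasLebesgueDensity

lemma congr_ae (h : HasLebesgueDensity f g) (hgF : g =ᵐ[volume] F) : HasLebesgueDensity f F where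
  locallyIntegrable := h.locallyIntegrable.congr hgF
  sub_eq_integral_of_le x y hxy := by
    rw [h.sub_eq_integral_of_le x y hxy]
    exact intervalIntegral.integral_congr_ae (hgF.mono fun _ hu _ => hu)

lemma eq_add_integral (h : HasLebesgueDensity f g) (x : ℝ) :
    f = fun y => f x + ∫ u in x..y, g u := by
  funext y
  rcases le_total x y with hxy | hyx
  · rw [← h.sub_eq_integral_of_le x y hxy, add_sub_cancel]
  · rw [intervalIntegral.integral_symm, ← h.sub_eq_integral_of_le y x hyx, neg_sub,
      add_sub_cancel]

lemma continuous (h : HasLebesgueDensity f g) : Continuous f := by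
  rw [h.eq_add_integral 0]
  refine continuous_const.add (intervalIntegral.continuous_primitive (fun a b => ?_) 0)
  exact (h.locallyIntegrable.integrableOn_isCompact isCompact_uIcc).intervalIntegrable

variable [CompleteSpace E]

lemma hasDerivWithinAt_Ici (h : HasLebesgueDensity f g) {x : ℝ}
    (hl : Tendsto g (𝓝[>] x) (𝓝 l)) : HasDerivWithinAt f l (Ici x) x := by
  rw [h.eq_add_integral x]
  exact (intervalIntegral.integral_hasDerivWithinAt_of_tendsto_ae_right .refl
    h.locallyIntegrable.aestronglyMeasurable.stronglyMeasurableAtFilter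
    (hl.mono_left inf_le_left)).const_add (f x)

lemma sub_eq_smul_of_dense_hasDerivWithinAt (h : HasLebesgueDensity f g)
    (hg : ∀ x, ∃ l, Tendsto g (𝓝[>] x) (𝓝 l))
    (hl : Dense {x | HasDerivWithinAt f l (Ici x) x}) (a b : ℝ) :
    f b - f a = (b - a) • l := by
  wlog hab : a ≤ b generalizing a b
  · rw [← neg_sub, this b a (le_of_not_ge hab), ← neg_smul, neg_sub]
  have hderiv (x : ℝ) : HasDerivWithinAt f (g.rightLim x) (Ici x) x :=
    h.hasDerivWithinAt_Ici (tendsto_rightLim_of_tendsto (hg x))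
  have hright : ∀ x, g.rightLim x = l := rightLim_eq_of_dense hg <| hl.mono fun x hx =>
    (uniqueDiffWithinAt_Ici x).eq_deriv _ (hderiv x) hx
  have hlinear (x : ℝ) : HasDerivWithinAt (fun y => f a + (y - a) • l) l (Ici x) x := by
    simpa using ((((hasDerivAt_id' x).sub_const a).smul_const l).const_add (f a)).hasDerivWithinAt
  have heq : f b = f a + (b - a) • l :=
    eq_of_has_deriv_right_eq (fun x _ => hright x ▸ hderiv x) (fun x _ => hlinear x)
      h.continuous.continuousOn (by fun_prop) (by simp) b (right_mem_Icc.2 hab)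
  rw [heq, add_sub_cancel_left]

end HasLebesgueDensity

end Density

lemma exists_tendsto_nhdsGT_of_boundedVariationOn_Icc {α E : Type*} [LinearOrder α]
    [TopologicalSpace α] [OrderTopology α] [PseudoMetricSpace E] [CompleteSpace E] {f : α → E}
    {a b x : α} (hf : BoundedVariationOn f (Icc a b)) (hx : x ∈ Ico a b) :
    ∃ l, Tendsto f (𝓝[>] x) (𝓝 l) := by
  simpa only [nhdsWithin_inter_of_mem (Icc_mem_nhdsGT_of_mem hx)] using hf.exists_tendsto_right x

lemma ae_hasDerivAt_zero_of_mutuallySingular {c : ℝ → ℝ} (hmono : Monotone c)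
    (hright : ∀ x, ContinuousWithinAt c (Ici x) x) {ν : Measure ℝ}
    (hν : ∀ x y : ℝ, x ≤ y → ν (Ioc x y) = ENNReal.ofReal (c y - c x))
    (hsing : ν.MutuallySingular volume) : ∀ᵐ x : ℝ, HasDerivAt c 0 x := by
  let f : StieltjesFunction ℝ := ⟨c, hmono, hright⟩
  have hf : f.measure = ν := Measure.ext_of_Ioc _ _ fun a b hab => by
    rw [f.measure_Ioc, hν a b hab.le]
  have hzero : f.measure.rnDeriv volume =ᵐ[volume] 0 :=
    (Measure.rnDeriv_eq_zero _ _).2 (hf ▸ hsing)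
  filter_upwards [f.ae_hasDerivAt, hzero] with x hx hx0
  simpa only [hx0, Pi.zero_apply, ENNReal.toReal_zero] using hx

lemma dense_preimage_of_continuous_of_injective {α β : Type*} [ConditionallyCompleteLinearOrder α]
    [TopologicalSpace α] [OrderTopology α] [DenselyOrdered α] [Nontrivial α] [LinearOrder β]
    [TopologicalSpace β] [OrderTopology β] [DenselyOrdered β] {f : α → β} {s : Set β}
    (hs : Dense s) (hf : Continuous f) (hinj : Injective f) : Dense (f ⁻¹' s) := by
  refine dense_of_exists_between fun a b hab => ?_
  rcases (hinj.ne hab.ne).lt_or_gt with hlt | hgt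
  · obtain ⟨z, hz, hzab⟩ := hs.exists_between hlt
    obtain ⟨x, hx, rfl⟩ := intermediate_value_Ioo hab.le hf.continuousOn hzab
    exact ⟨x, hz, hx⟩
  · obtain ⟨z, hz, hzab⟩ := hs.exists_between hgt
    obtain ⟨x, hx, rfl⟩ := intermediate_value_Ioo' hab.le hf.continuousOn hzab
    exact ⟨x, hz, hx⟩

lemma dense_hasDerivAt_inv_of_rightInverse {s t : ℝ → ℝ} {a : ℝ} (ht : Continuous t)
    (hst : RightInverse t s) (ha : a ≠ 0) (hs : Dense {x | HasDerivAt s a x}) :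
    Dense {y | HasDerivAt t a⁻¹ y} :=
  (dense_preimage_of_continuous_of_injective hs ht hst.injective).mono fun _ hy =>
    HasDerivAt.of_local_left_inverse ht.continuousAt hy ha (.of_forall hst)

theorem stmt13_general {c t g : ℝ → ℝ} (hderiv : Dense {x | HasDerivAt c 0 x})
    (hnc : ∃ x y, c x ≠ c y) (hst : RightInverse t fun x => x + c x)
    (hg : HasLebesgueDensity t g) :
    ¬ ∃ F : ℝ → ℝ, (∀ x, ∃ l, Tendsto F (𝓝[>] x) (𝓝 l)) ∧ g =ᵐ[volume] F := by
  rintro ⟨F, hF, hgF⟩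
  have hs : Dense {x | HasDerivAt (fun x => x + c x) 1 x} := hderiv.mono fun x hx => by
    simpa only [mem_ofPred_eq, add_zero] using (hasDerivAt_id' x).fun_add hx
  have ht : Dense {y | HasDerivWithinAt t 1 (Ici y) y} :=
    (dense_hasDerivAt_inv_of_rightInverse hg.continuous hst one_ne_zero hs).mono fun y hy =>
      (inv_one (G := ℝ) ▸ hy).hasDerivWithinAt
  have htranslate (y : ℝ) : t y - t 0 = y := by
    simpa only [smul_eq_mul, mul_one, sub_zero] using
      (hg.congr_ae hgF).sub_eq_smul_of_dense_hasDerivWithinAt hF ht 0 y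
  have hconst (x : ℝ) : c x = -t 0 := by
    have htx : t (x - t 0) = x := by linarith [htranslate (x - t 0)]
    have hx : t (x - t 0) + c (t (x - t 0)) = x - t 0 := hst (x - t 0)
    rw [htx] at hx
    linarith
  obtain ⟨x, y, hxy⟩ := hnc
  exact hxy ((hconst x).trans (hconst y).symm)

/-- With `c` nondecreasing, continuous, bounded, non-constant, `ν ⊥ λ` its
Stieltjes measure, `s(x) = x + c(x)` and `t = s⁻¹`: no density `g` of the absolutely
continuous function `t` agrees Lebesgue-almost everywhere with a function of locally bounded
variation on `ℝ`. -/
theorem stmt13 (c : ℝ → ℝ) (hmono : Monotone c) (hcont : Continuous c)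
    (hbdd : ∃ M : ℝ, ∀ x, |c x| ≤ M) (hnc : ∃ x y : ℝ, c x ≠ c y)
    (ν : Measure ℝ)
    (hν : ∀ x y : ℝ, x ≤ y → ν (Set.Ioc x y) = ENNReal.ofReal (c y - c x))
    (hsing : ν.MutuallySingular volume)
    (t : ℝ → ℝ) (hts : ∀ x : ℝ, t (x + c x) = x) (hst : ∀ y : ℝ, t y + c (t y) = y) :
    ∀ g : ℝ → ℝ, LocallyIntegrable g volume →
      (∀ x y : ℝ, x ≤ y → t y - t x = ∫ u in x..y, g u) →
      ¬ ∃ F : ℝ → ℝ, (∀ a b : ℝ, BoundedVariationOn F (Set.Icc a b)) ∧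
        ∀ᵐ y : ℝ, g y = F y := by
  rintro g hg ht ⟨F, hF, hgF⟩
  have hderiv := ae_hasDerivAt_zero_of_mutuallySingular hmono
    (fun _ => hcont.continuousWithinAt) hν hsing
  exact stmt13_general (Measure.dense_of_ae hderiv) hnc hst ⟨hg, ht⟩ ⟨F, fun x =>
    exists_tendsto_nhdsGT_of_boundedVariationOn_Icc (hF x (x + 1)) ⟨le_rfl, lt_add_one x⟩, hgF⟩
end

section
/- Let b : ℝ → ℝ be measurable with ∫_K b(z)² dz < ∞ for every compact K ⊆ ℝ. Set B(y) := ∫_0^y b(z) dz, s(x) := ∫_0^x exp(−2B(y)) dy, J := s(ℝ), and let t : J → ℝ be the inverse of s. Then t is continuously differentiable on J with t'(u) = exp(2B(t(u))) > 0 for all u ∈ J; t' is absolutely continuous on every compact subinterval of J with almost-everywhere derivative t''(u) = 2 b(t(u)) t'(u)²; and for every compact interval K ⊆ J one has ∫_K t''(u)² / t'(u)³ du = 4 ∫_{t(K)} b(x)² dx. -/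
open MeasureTheory Set

open Filter

/-!
Everything is read in the variable `x = t(u)`. Since `ds = exp(-2B) dx`, the inverse has
`t' = exp(2B) ∘ t`, and the two integrands become `t'' du = 2b exp(2B) dx` and
`t''² / t'³ du = 4b² dx`. It remains to integrate the first one, that is, to see that
`2b exp(2B)` is the density of `exp(2B)`. As `B` is only absolutely continuous, this rests on the
fact that composing with a `C¹` function preserves absolute continuity.
-/

section AbsolutelyContinuous

theorem absolutelyContinuousOnInterval_comp_of_lipschitzOnWith
    {X Y : Type*} [PseudoMetricSpace X] [PseudoMetricSpace Y] {f : ℝ → X} {g : X → Y}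
    {C : NNReal} {p q : ℝ} (hg : LipschitzOnWith C g (f '' uIcc p q))
    (hf : AbsolutelyContinuousOnInterval f p q) :
    AbsolutelyContinuousOnInterval (g ∘ f) p q := by
  have hlim := Tendsto.const_mul (C : ℝ) hf
  rw [mul_zero] at hlim
  refine squeeze_zero' (Eventually.of_forall fun _ => Finset.sum_nonneg fun _ _ => dist_nonneg)
    ?_ hlim
  filter_upwards [mem_inf_of_right (mem_principal_self _)] with E hE
  rw [Finset.mul_sum]
  exact Finset.sum_le_sum fun i hi => hg.dist_le_mul _ (mem_image_of_mem f (hE.1 i hi).1) _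
    (mem_image_of_mem f (hE.1 i hi).2)

theorem absolutelyContinuousOnInterval_comp_of_locallyLipschitzOn
    {F Y : Type*} [SeminormedAddCommGroup F] [PseudoMetricSpace Y] {f : ℝ → F} {g : F → Y}
    {p q : ℝ} (hg : LocallyLipschitzOn (f '' uIcc p q) g)
    (hf : AbsolutelyContinuousOnInterval f p q) :
    AbsolutelyContinuousOnInterval (g ∘ f) p q := by
  obtain ⟨_, hC⟩ := hg.exists_lipschitzOnWith_of_compact
    (isCompact_uIcc.image_of_continuousOn hf.continuousOn)
  exact absolutelyContinuousOnInterval_comp_of_lipschitzOnWith hC hf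

theorem absolutelyContinuousOnInterval_primitive {f : ℝ → ℝ} (hf : LocallyIntegrable f volume)
    (a p q : ℝ) : AbsolutelyContinuousOnInterval (fun x => ∫ z in a..x, f z) p q := by
  have hint (x y : ℝ) : IntervalIntegrable f volume x y :=
    (hf.integrableOn_isCompact isCompact_uIcc).intervalIntegrable
  have hsplit : (fun x => ∫ z in a..x, f z) =
      (fun v => (∫ z in a..p, f z) + v) ∘ fun x => ∫ z in p..x, f z :=
    funext fun x => (intervalIntegral.integral_add_adjacent_intervals (hint a p) (hint p x)).symm
  rw [hsplit]
  exact absolutelyContinuousOnInterval_comp_of_lipschitzOnWith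
    (isometry_add_left _).lipschitz.lipschitzOnWith
    ((hint p q).absolutelyContinuousOnInterval_intervalIntegral left_mem_uIcc)

theorem integral_deriv_comp_mul_of_absolutelyContinuousOnInterval {f F g : ℝ → ℝ} {p q : ℝ}
    (hg : ContDiff ℝ 1 g) (hF : AbsolutelyContinuousOnInterval F p q)
    (hFf : ∀ᵐ x, x ∈ uIoc p q → HasDerivAt F (f x) x) :
    ∫ x in p..q, deriv g (F x) * f x = g (F q) - g (F p) := by
  have hgF := absolutelyContinuousOnInterval_comp_of_locallyLipschitzOn
    hg.locallyLipschitz.locallyLipschitzOn hF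
  refine (intervalIntegral.integral_congr_ae ?_).trans hgF.integral_deriv_eq_sub
  filter_upwards [hFf] with x hx hxpq
  exact ((hg.differentiable one_ne_zero (F x)).hasDerivAt.comp x (hx hxpq)).deriv.symm

theorem integral_const_mul_mul_exp_primitive {f : ℝ → ℝ} (hf : LocallyIntegrable f volume)
    (a c p q : ℝ) :
    ∫ x in p..q, c * f x * Real.exp (c * ∫ z in a..x, f z) =
      Real.exp (c * ∫ z in a..q, f z) - Real.exp (c * ∫ z in a..p, f z) := by
  have hexp (v : ℝ) : HasDerivAt (fun v => Real.exp (c * v)) (Real.exp (c * v) * c) v := by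
    simpa using ((hasDerivAt_id v).const_mul c).exp
  have hftc := integral_deriv_comp_mul_of_absolutelyContinuousOnInterval
    (g := fun v => Real.exp (c * v)) (by fun_prop)
    (absolutelyContinuousOnInterval_primitive hf a p q)
    ((LocallyIntegrable.ae_hasDerivAt_integral hf).mono fun x hx _ => hx a)
  rw [← hftc]
  refine intervalIntegral.integral_congr fun x _ => ?_
  simp only [(hexp _).deriv]
  ring

end AbsolutelyContinuous

section ChangeOfVariables

theorem image_eq_preimage_of_leftInverse_of_subset_range {α β : Type*} {f : α → β} {g : β → α}
    (hgf : Function.LeftInverse g f) {K : Set β} (hK : K ⊆ range f) : g '' K = f ⁻¹' K := by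
  rw [← hgf.image_image (f ⁻¹' K), image_preimage_eq_of_subset hK]

theorem image_image_of_leftInverse_of_subset_range {α β : Type*} {f : α → β} {g : β → α}
    (hgf : Function.LeftInverse g f) {K : Set β} (hK : K ⊆ range f) : f '' (g '' K) = K := by
  rw [image_eq_preimage_of_leftInverse_of_subset_range hgf hK, image_preimage_eq_of_subset hK]

theorem measurableSet_image_of_leftInverse {α β : Type*} [MeasurableSpace α] [MeasurableSpace β]
    {f : α → β} {g : β → α} (hf : Measurable f) (hgf : Function.LeftInverse g f) {K : Set β}
    (hK : MeasurableSet K) (hKf : K ⊆ range f) : MeasurableSet (g '' K) := by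
  rw [image_eq_preimage_of_leftInverse_of_subset_range hgf hKf]
  exact hf hK

variable {E : Type*} [NormedAddCommGroup E] [NormedSpace ℝ E] {s s' t : ℝ → ℝ} {K : Set ℝ}

theorem setIntegral_comp_leftInverse (hs : ∀ x, HasDerivAt s (s' x) x)
    (hts : Function.LeftInverse t s) (hK : MeasurableSet K) (hKs : K ⊆ range s) (g : ℝ → E) :
    ∫ u in K, g (t u) = ∫ x in t '' K, |s' x| • g x := by
  have hscont : Continuous s := continuous_iff_continuousAt.2 fun x => (hs x).continuousAt
  have hcov := integral_image_eq_integral_abs_deriv_smul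
    (measurableSet_image_of_leftInverse hscont.measurable hts hK hKs)
    (fun x _ => (hs x).hasDerivWithinAt) hts.injective.injOn (g ∘ t)
  simpa only [image_image_of_leftInverse_of_subset_range hts hKs, Function.comp_apply, hts _]
    using hcov

theorem integrableOn_comp_leftInverse_iff (hs : ∀ x, HasDerivAt s (s' x) x)
    (hts : Function.LeftInverse t s) (hK : MeasurableSet K) (hKs : K ⊆ range s) (g : ℝ → E) :
    IntegrableOn (g ∘ t) K ↔ IntegrableOn (fun x => |s' x| • g x) (t '' K) := by
  have hscont : Continuous s := continuous_iff_continuousAt.2 fun x => (hs x).continuousAt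
  have hcov := integrableOn_image_iff_integrableOn_abs_deriv_smul
    (measurableSet_image_of_leftInverse hscont.measurable hts hK hKs)
    (fun x _ => (hs x).hasDerivWithinAt) hts.injective.injOn (g ∘ t)
  simpa only [image_image_of_leftInverse_of_subset_range hts hKs, Function.comp_apply, hts _]
    using hcov

theorem intervalIntegral_comp_leftInverse (hs : ∀ x, HasDerivAt s (s' x) x) (hs' : ∀ x, 0 ≤ s' x)
    (hts : Function.LeftInverse t s) {u v : ℝ} (hu : u ∈ range s) (hv : v ∈ range s)
    (g : ℝ → E) : ∫ w in u..v, g (t w) = ∫ x in t u..t v, s' x • g x := by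
  obtain ⟨p, rfl⟩ := hu
  obtain ⟨q, rfl⟩ := hv
  have hcov := intervalIntegral.integral_deriv_smul_comp_of_deriv_nonneg (a := p) (b := q)
    (g := g ∘ t) (fun x _ => (hs x).continuousAt.continuousWithinAt) (fun x _ => hs x)
    (fun x _ => hs' x)
  simpa only [Function.comp_apply, hts _] using hcov.symm

end ChangeOfVariables

section ScaleFunction

variable {B t : ℝ → ℝ} {K : Set ℝ}

/-- The scale function of the diffusion `dX = b(X) dt + dW` whose drift `b` has primitive `B`,
normalised to vanish at `0`. -/
noncomputable def scaleFunction (B : ℝ → ℝ) (x : ℝ) : ℝ :=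
  ∫ y in (0 : ℝ)..x, Real.exp (-2 * B y)

theorem hasStrictDerivAt_scaleFunction (hB : Continuous B) (x : ℝ) :
    HasStrictDerivAt (scaleFunction B) (Real.exp (-2 * B x)) x :=
  Continuous.integral_hasStrictDerivAt (by fun_prop) 0 x

theorem hasDerivAt_scaleFunction (hB : Continuous B) (x : ℝ) :
    HasDerivAt (scaleFunction B) (Real.exp (-2 * B x)) x :=
  (hasStrictDerivAt_scaleFunction hB x).hasDerivAt

theorem hasDerivAt_of_leftInverse_scaleFunction (hB : Continuous B)
    (ht : Function.LeftInverse t (scaleFunction B)) {u : ℝ} (hu : u ∈ range (scaleFunction B)) :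
    HasDerivAt t (Real.exp (2 * B (t u))) u := by
  obtain ⟨x, rfl⟩ := hu
  have hinv := ((hasStrictDerivAt_scaleFunction hB x).to_local_left_inverse (Real.exp_ne_zero _)
    (Eventually.of_forall ht)).hasDerivAt
  rw [← Real.exp_neg, neg_mul, neg_neg] at hinv
  rwa [ht x]

theorem continuousOn_of_leftInverse_scaleFunction (hB : Continuous B)
    (ht : Function.LeftInverse t (scaleFunction B)) : ContinuousOn t (range (scaleFunction B)) :=
  fun _ hu => (hasDerivAt_of_leftInverse_scaleFunction hB ht hu).continuousAt.continuousWithinAt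

theorem exp_neg_two_mul_mul_two_mul_mul_exp_sq (v c : ℝ) :
    Real.exp (-2 * v) * (2 * c * Real.exp (2 * v) ^ 2) = 2 * c * Real.exp (2 * v) := by
  rw [neg_mul, Real.exp_neg]
  field_simp

theorem exp_neg_two_mul_mul_sq_div_exp_cube (v c : ℝ) :
    Real.exp (-2 * v) * ((2 * c * Real.exp (2 * v) ^ 2) ^ 2 / Real.exp (2 * v) ^ 3) =
      4 * c ^ 2 := by
  rw [neg_mul, Real.exp_neg]
  field_simp
  ring

theorem integrableOn_two_mul_mul_exp_sq_comp_leftInverse_scaleFunction {b : ℝ → ℝ}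
    (hB : Continuous B) (ht : Function.LeftInverse t (scaleFunction B))
    (hb : LocallyIntegrable b volume) (hK : IsCompact K) (hKs : K ⊆ range (scaleFunction B)) :
    IntegrableOn (fun u => 2 * b (t u) * Real.exp (2 * B (t u)) ^ 2) K := by
  have htK : IsCompact (t '' K) :=
    hK.image_of_continuousOn ((continuousOn_of_leftInverse_scaleFunction hB ht).mono hKs)
  refine (integrableOn_comp_leftInverse_iff (hasDerivAt_scaleFunction hB) ht hK.measurableSet hKs
    fun x => 2 * b x * Real.exp (2 * B x) ^ 2).2 ?_
  simp only [Real.abs_exp, smul_eq_mul, exp_neg_two_mul_mul_two_mul_mul_exp_sq]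
  exact IntegrableOn.mul_continuousOn ((hb.integrableOn_isCompact htK).const_mul 2)
    (by fun_prop) htK

theorem intervalIntegral_two_mul_mul_exp_sq_comp_leftInverse_scaleFunction (hB : Continuous B)
    (ht : Function.LeftInverse t (scaleFunction B)) {u v : ℝ}
    (hu : u ∈ range (scaleFunction B)) (hv : v ∈ range (scaleFunction B)) (b : ℝ → ℝ) :
    ∫ w in u..v, 2 * b (t w) * Real.exp (2 * B (t w)) ^ 2 =
      ∫ x in t u..t v, 2 * b x * Real.exp (2 * B x) := by
  rw [intervalIntegral_comp_leftInverse (hasDerivAt_scaleFunction hB)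
    (fun _ => (Real.exp_pos _).le) ht hu hv (fun x => 2 * b x * Real.exp (2 * B x) ^ 2)]
  simp only [smul_eq_mul, exp_neg_two_mul_mul_two_mul_mul_exp_sq]

theorem integrableOn_sq_div_exp_cube_comp_leftInverse_scaleFunction_iff (hB : Continuous B)
    (ht : Function.LeftInverse t (scaleFunction B)) (hK : MeasurableSet K)
    (hKs : K ⊆ range (scaleFunction B)) (b : ℝ → ℝ) :
    IntegrableOn (fun u => (2 * b (t u) * Real.exp (2 * B (t u)) ^ 2) ^ 2 /
        Real.exp (2 * B (t u)) ^ 3) K ↔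
      IntegrableOn (fun x => b x ^ 2) (t '' K) := by
  refine (integrableOn_comp_leftInverse_iff (hasDerivAt_scaleFunction hB) ht hK hKs
    fun x => (2 * b x * Real.exp (2 * B x) ^ 2) ^ 2 / Real.exp (2 * B x) ^ 3).trans ?_
  simp only [Real.abs_exp, smul_eq_mul, exp_neg_two_mul_mul_sq_div_exp_cube]
  exact integrable_const_mul_iff (IsUnit.mk0 4 four_ne_zero) _

theorem setIntegral_sq_div_exp_cube_comp_leftInverse_scaleFunction (hB : Continuous B)
    (ht : Function.LeftInverse t (scaleFunction B)) (hK : MeasurableSet K)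
    (hKs : K ⊆ range (scaleFunction B)) (b : ℝ → ℝ) :
    ∫ u in K, (2 * b (t u) * Real.exp (2 * B (t u)) ^ 2) ^ 2 / Real.exp (2 * B (t u)) ^ 3 =
      4 * ∫ x in t '' K, b x ^ 2 := by
  rw [setIntegral_comp_leftInverse (hasDerivAt_scaleFunction hB) ht hK hKs
    (fun x => (2 * b x * Real.exp (2 * B x) ^ 2) ^ 2 / Real.exp (2 * B x) ^ 3)]
  simp only [Real.abs_exp, smul_eq_mul, exp_neg_two_mul_mul_sq_div_exp_cube]
  exact integral_const_mul 4 _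

end ScaleFunction

theorem locallyIntegrable_of_integrableOn_sq {X : Type*} [TopologicalSpace X]
    [LocallyCompactSpace X] [MeasurableSpace X] {μ : Measure X} [IsFiniteMeasureOnCompacts μ]
    {f : X → ℝ} (hf : AEStronglyMeasurable f μ)
    (hfsq : ∀ K : Set X, IsCompact K → IntegrableOn (fun z => f z ^ 2) K μ) :
    LocallyIntegrable f μ := by
  refine locallyIntegrable_iff.2 fun K hK => ?_
  have : IsFiniteMeasure (μ.restrict K) := isFiniteMeasure_restrict.2 hK.measure_lt_top.ne
  exact ((memLp_two_iff_integrable_sq hf.restrict).2 (hfsq K hK)).integrable one_le_two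

/-- The equivalence in the last clause keeps its integral identity from being an equality of two
junk values. -/
theorem stmt14_general {b : ℝ → ℝ} (hb : LocallyIntegrable b volume) {B s t : ℝ → ℝ}
    (hB : ∀ y : ℝ, B y = ∫ z in (0 : ℝ)..y, b z)
    (hs : ∀ x : ℝ, s x = ∫ y in (0 : ℝ)..x, Real.exp (-2 * B y))
    (hts : ∀ x : ℝ, t (s x) = x) :
    (∀ u ∈ range s,
      HasDerivAt t (Real.exp (2 * B (t u))) u ∧ 0 < Real.exp (2 * B (t u))) ∧
    ContinuousOn (fun u => Real.exp (2 * B (t u))) (range s) ∧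
    (∀ a' b' : ℝ, Icc a' b' ⊆ range s →
      IntegrableOn (fun u => 2 * b (t u) * (Real.exp (2 * B (t u))) ^ 2)
        (Icc a' b') volume ∧
      (∀ x ∈ Icc a' b', ∀ y ∈ Icc a' b', x ≤ y →
        Real.exp (2 * B (t y)) - Real.exp (2 * B (t x)) =
          ∫ u in x..y, 2 * b (t u) * (Real.exp (2 * B (t u))) ^ 2)) ∧
    (∀ a' b' : ℝ, Icc a' b' ⊆ range s →
      (IntegrableOn (fun u =>
          (2 * b (t u) * (Real.exp (2 * B (t u))) ^ 2) ^ 2 / (Real.exp (2 * B (t u))) ^ 3)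
          (Icc a' b') ↔
        IntegrableOn (fun x => (b x) ^ 2) (t '' Icc a' b')) ∧
      ∫ u in Icc a' b',
          (2 * b (t u) * (Real.exp (2 * B (t u))) ^ 2) ^ 2 / (Real.exp (2 * B (t u))) ^ 3
        = 4 * ∫ x in t '' Icc a' b', (b x) ^ 2) := by
  obtain rfl : s = scaleFunction B := funext hs
  have hBcont : Continuous B := by
    rw [funext hB]
    exact intervalIntegral.continuous_primitive
      (fun x y => (hb.integrableOn_isCompact isCompact_uIcc).intervalIntegrable) 0
  refine ⟨fun u hu => ⟨hasDerivAt_of_leftInverse_scaleFunction hBcont hts hu, Real.exp_pos _⟩,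
    ?_, fun a' b' hK => ⟨?_, fun x hx y hy _ => ?_⟩, fun a' b' hK => ⟨?_, ?_⟩⟩
  · exact (hBcont.const_mul 2).rexp.comp_continuousOn
      (continuousOn_of_leftInverse_scaleFunction hBcont hts)
  · exact integrableOn_two_mul_mul_exp_sq_comp_leftInverse_scaleFunction hBcont hts hb
      isCompact_Icc hK
  · rw [intervalIntegral_two_mul_mul_exp_sq_comp_leftInverse_scaleFunction hBcont hts
      (hK hx) (hK hy)]
    simp only [hB]
    exact (integral_const_mul_mul_exp_primitive hb 0 2 (t x) (t y)).symm
  · exact integrableOn_sq_div_exp_cube_comp_leftInverse_scaleFunction_iff hBcont hts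
      measurableSet_Icc hK b
  · exact setIntegral_sq_div_exp_cube_comp_leftInverse_scaleFunction hBcont hts
      measurableSet_Icc hK b

/-- Let `b` be locally square integrable, `B(y) = ∫_0^y b`,
`s(x) = ∫_0^x exp(−2B(y)) dy`, `J = s(ℝ)` and `t` the inverse of `s`. Then `t` is continuously
differentiable on `J` with `t'(u) = exp(2B(t(u))) > 0`; `t'` is absolutely continuous on every
compact subinterval of `J` with a.e. derivative `t''(u) = 2 b(t(u)) t'(u)²`; and for every
compact interval `K ⊆ J`, `∫_K t''(u)²/t'(u)³ du = 4 ∫_{t(K)} b(x)² dx`. -/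
theorem stmt14 (b : ℝ → ℝ) (hb : Measurable b)
    (hbsq : ∀ K : Set ℝ, IsCompact K → IntegrableOn (fun z => (b z) ^ 2) K volume)
    (B s : ℝ → ℝ)
    (hB : ∀ y : ℝ, B y = ∫ z in (0:ℝ)..y, b z)
    (hs : ∀ x : ℝ, s x = ∫ y in (0:ℝ)..x, Real.exp (-2 * B y))
    (t : ℝ → ℝ) (hts : ∀ x : ℝ, t (s x) = x) (hst : ∀ u ∈ Set.range s, s (t u) = u) :
    (∀ u ∈ Set.range s,
      HasDerivAt t (Real.exp (2 * B (t u))) u ∧ 0 < Real.exp (2 * B (t u))) ∧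
    ContinuousOn (fun u => Real.exp (2 * B (t u))) (Set.range s) ∧
    (∀ a' b' : ℝ, Set.Icc a' b' ⊆ Set.range s →
      IntegrableOn (fun u => 2 * b (t u) * (Real.exp (2 * B (t u))) ^ 2)
        (Set.Icc a' b') volume ∧
      (∀ x ∈ Set.Icc a' b', ∀ y ∈ Set.Icc a' b', x ≤ y →
        Real.exp (2 * B (t y)) - Real.exp (2 * B (t x)) =
          ∫ u in x..y, 2 * b (t u) * (Real.exp (2 * B (t u))) ^ 2)) ∧
    (∀ a' b' : ℝ, Set.Icc a' b' ⊆ Set.range s →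
      ∫ u in Set.Icc a' b',
          (2 * b (t u) * (Real.exp (2 * B (t u))) ^ 2) ^ 2 / (Real.exp (2 * B (t u))) ^ 3
        = 4 * ∫ x in t '' Set.Icc a' b', (b x) ^ 2) := by
  obtain ⟨hderiv, hcont, hac, henergy⟩ :=
    stmt14_general (locallyIntegrable_of_integrableOn_sq hb.aestronglyMeasurable hbsq) hB hs hts
  exact ⟨hderiv, hcont, hac, fun a' b' hK => (henergy a' b' hK).2⟩
end

section
/- Let s : ℝ → ℝ be strictly increasing and continuous with s(0) = 0, let μ be its Stieltjes measure, and let μ = g·λ + κ be its Lebesgue decomposition (g ≥ 0 locally integrable, κ ⊥ λ) with κ ≠ 0. Assume further that Lebesgue measure λ is absolutely continuous with respect to μ. Then the set of strictly increasing continuous functions σ : ℝ → ℝ with σ(0) = 0 whose Stieltjes measure ν satisfies g·λ ≤ ν ≤ μ, ν ≪ μ with Radon–Nikodym derivative dν/dμ taking only the values 0 and 1 μ-almost everywhere, and λ ≪ ν, is uncountable. -/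
open MeasureTheory Set

open scoped Topology

/-
Let `N` be a `κ`-null set carrying Lebesgue measure, and for `t : ℝ` let `σ_t` be the distribution
function of `μ` restricted to `N ∪ (-∞, t]`; each `σ_t` belongs to the set in question. If
`σ_a = σ_b` with `a < b`, then `μ`, hence `κ`, does not charge `(a, b] \ N`, so `κ (a, b] = 0`. Thus
`t ↦ σ_t` is constant only across `κ`-null intervals, and if it took only countably many values then
its fibres would cover the line by countably many `κ`-null sets, contradicting `κ ≠ 0`.
-/

section Restrict

variable {α : Type*} [MeasurableSpace α] {μ γ κ : Measure α} {s t N : Set α}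

theorem measure_sdiff_eq_zero_of_restrict_eq (hs : MeasurableSet s)
    (h : μ.restrict s = μ.restrict t) : μ (t \ s) = 0 :=
  calc μ (t \ s) = μ.restrict t (t \ s) := (Measure.restrict_eq_self μ sdiff_subset).symm
    _ = μ.restrict s (t \ s) := by rw [h]
    _ = 0 := by rw [Measure.restrict_apply' hs, sdiff_inter_self, measure_empty]

theorem add_restrict_eq_left (hγ : γ Nᶜ = 0) (hκ : κ N = 0) : (γ + κ).restrict N = γ := by
  rw [Measure.restrict_add, Measure.restrict_eq_zero.2 hκ, add_zero,
    Measure.restrict_eq_self_of_ae_mem (mem_ae_iff.2 hγ)]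

end Restrict

theorem measure_Ioc_sdiff_eq_zero_of_restrict_union_Iic_eq {μ : Measure ℝ} {N : Set ℝ} {a b : ℝ}
    (hN : MeasurableSet N) (h : μ.restrict (N ∪ Iic a) = μ.restrict (N ∪ Iic b)) :
    μ (Ioc a b \ N) = 0 := by
  have hdiff : (N ∪ Iic b) \ (N ∪ Iic a) = Ioc a b \ N := by
    ext x
    simp only [mem_sdiff, mem_union, mem_Iic, mem_Ioc]
    grind
  rw [← hdiff]
  exact measure_sdiff_eq_zero_of_restrict_eq (hN.union measurableSet_Iic) h

theorem eq_zero_of_countable_range_of_measure_Ioo {β : Type*} {κ : Measure ℝ}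
    [NullSingletonClass κ] {f : ℝ → β} (hf : (range f).Countable)
    (h : ∀ a b, a < b → f a = f b → κ (Ioo a b) = 0) : κ = 0 := by
  have fiber_null (y : β) : κ (f ⁻¹' {y}) = 0 := by
    refine measure_eq_zero_iff_ae_notMem.2
      (ae_of_mem_of_ae_of_mem_inter_Ioo fun a b ha hb hab => ?_)
    filter_upwards [measure_eq_zero_iff_ae_notMem.1 (h a b hab (Eq.trans ha hb.symm))]
      with x hx hmem using absurd hmem.2 hx
  rw [← Measure.measure_univ_eq_zero, ← preimage_range f, ← biUnion_preimage_singleton,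
    measure_biUnion_null_iff hf]
  exact fun y _ => fiber_null y

section Stieltjes

variable {s : ℝ → ℝ} {μ : Measure ℝ}

theorem isLocallyFiniteMeasure_of_measure_Ioc
    (hμ : ∀ x y, x ≤ y → μ (Ioc x y) = ENNReal.ofReal (s y - s x)) :
    IsLocallyFiniteMeasure μ := by
  refine ⟨fun x => ⟨Ioc (x - 1) (x + 1), Ioc_mem_nhds (by linarith) (by linarith), ?_⟩⟩
  rw [hμ _ _ (by linarith)]
  exact ENNReal.ofReal_lt_top

theorem nullSingletonClass_of_measure_Ioc (hs : Continuous s)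
    (hμ : ∀ x y, x ≤ y → μ (Ioc x y) = ENNReal.ofReal (s y - s x)) :
    NullSingletonClass μ := by
  refine ⟨fun x => ?_⟩
  have hlim : Filter.Tendsto (fun y => ENNReal.ofReal (s x - s y)) (𝓝[<] x) (𝓝 0) := by
    have h : Continuous fun y => ENNReal.ofReal (s x - s y) :=
      ENNReal.continuous_ofReal.comp (continuous_const.sub hs)
    simpa using (h.tendsto x).mono_left nhdsWithin_le_nhds
  have hle : ∀ᶠ y in 𝓝[<] x, μ {x} ≤ ENNReal.ofReal (s x - s y) := by
    filter_upwards [self_mem_nhdsWithin] with y hy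
    rw [← hμ y x hy.le]
    exact measure_mono (singleton_subset_iff.2 (right_mem_Ioc.2 hy))
  exact nonpos_iff_eq_zero.1 (ge_of_tendsto hlim hle)

end Stieltjes

/-- The distribution function of a measure on `ℝ`, normalised to vanish at `0`. It has the expected
values when the measure is locally finite, the signed interval integral giving `-ν (Ioc x 0)` at
`x ≤ 0`. -/
noncomputable def distributionFunction (ν : Measure ℝ) (x : ℝ) : ℝ := ∫ _ in (0 : ℝ)..x, 1 ∂ν

namespace distributionFunction

theorem map_zero (ν : Measure ℝ) : distributionFunction ν 0 = 0 :=
  intervalIntegral.integral_same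

variable (ν : Measure ℝ) [IsLocallyFiniteMeasure ν]

theorem measure_Ioc {x y : ℝ} (h : x ≤ y) :
    ν (Ioc x y) = ENNReal.ofReal (distributionFunction ν y - distributionFunction ν x) := by
  unfold distributionFunction
  rw [intervalIntegral.integral_interval_sub_left intervalIntegrable_const
    intervalIntegrable_const, intervalIntegral.integral_of_le h,
    ofReal_setIntegral_one_of_measure_ne_top measure_Ioc_lt_top.ne]

theorem continuous [NullSingletonClass ν] : Continuous (distributionFunction ν) :=
  intervalIntegral.continuous_primitive (fun _ _ => intervalIntegrable_const) 0

theorem strictMono [ν.IsOpenPosMeasure] : StrictMono (distributionFunction ν) := by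
  intro x y hxy
  have hpos : 0 < ν (Ioc x y) :=
    (Measure.measure_Ioo_pos ν |>.2 hxy).trans_le (measure_mono Ioo_subset_Ioc_self)
  rwa [measure_Ioc ν hxy.le, ENNReal.ofReal_pos, sub_pos] at hpos

variable {ν} in
theorem measure_eq_of_eq {ν' : Measure ℝ} [IsLocallyFiniteMeasure ν']
    (h : distributionFunction ν = distributionFunction ν') : ν = ν' :=
  Measure.ext_of_Ioc ν ν' fun x y hxy => by rw [measure_Ioc ν hxy.le, measure_Ioc ν' hxy.le, h]

end distributionFunction

/-- The strictly increasing continuous functions, vanishing at `0`, whose Stieltjes measure `ν` is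
the restriction of `μ` to some set (encoded by `dν/dμ ∈ {0, 1}`), dominates `γ`, and does not lose
any `ρ`-nonnull set. In the application `ρ` is Lebesgue measure and `γ` is the absolutely continuous
part of `μ`. -/
def intermediateDistributionFunctions (γ μ ρ : Measure ℝ) : Set (ℝ → ℝ) :=
  {σ | StrictMono σ ∧ Continuous σ ∧ σ 0 = 0 ∧
    ∃ ν : Measure ℝ,
      (∀ x y : ℝ, x ≤ y → ν (Ioc x y) = ENNReal.ofReal (σ y - σ x)) ∧
      γ ≤ ν ∧ ν ≤ μ ∧ ν ≪ μ ∧ (∀ᵐ x ∂μ, ν.rnDeriv μ x = 0 ∨ ν.rnDeriv μ x = 1) ∧ ρ ≪ ν}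

section Uncountable

variable {γ κ μ ρ : Measure ℝ} [IsLocallyFiniteMeasure μ] [NullSingletonClass μ]
  [ρ.IsOpenPosMeasure]

theorem distributionFunction_restrict_mem {E : Set ℝ} (hE : MeasurableSet E)
    (hγ : γ ≤ μ.restrict E) (hρ : ρ ≪ μ.restrict E) :
    distributionFunction (μ.restrict E) ∈ intermediateDistributionFunctions γ μ ρ := by
  have := hρ.isOpenPosMeasure
  refine ⟨distributionFunction.strictMono _, distributionFunction.continuous _,
    distributionFunction.map_zero _, μ.restrict E,
    fun _ _ h => distributionFunction.measure_Ioc _ h, hγ, Measure.restrict_le_self,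
    Measure.restrict_le_self.absolutelyContinuous, ?_, hρ⟩
  filter_upwards [Measure.rnDeriv_restrict_self μ hE] with x hx
  rw [hx]
  exact indicator_eq_zero_or_self E 1 x

theorem stmt15_general (hdecomp : μ = γ + κ) (hγ : γ ≪ ρ) (hsing : κ ⟂ₘ ρ) (hκ : κ ≠ 0)
    (habs : ρ ≪ μ) : ¬ (intermediateDistributionFunctions γ μ ρ).Countable := by
  intro hcount
  obtain ⟨N, hN, hκN, hρN⟩ := hsing
  have hκμ : κ ≤ μ := hdecomp ▸ Measure.le_add_left le_rfl
  have : NullSingletonClass κ := ⟨fun x => hκμ.absolutelyContinuous (measure_singleton x)⟩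
  have hγN : μ.restrict N = γ := hdecomp ▸ add_restrict_eq_left (hγ hρN) hκN
  have hρμ : ρ ≪ μ.restrict N := by
    simpa only [Measure.restrict_eq_self_of_ae_mem (mem_ae_iff.2 hρN)] using habs.restrict N
  let σ : ℝ → ℝ → ℝ := fun t => distributionFunction (μ.restrict (N ∪ Iic t))
  have hσ (t : ℝ) : σ t ∈ intermediateDistributionFunctions γ μ ρ := by
    have hle : μ.restrict N ≤ μ.restrict (N ∪ Iic t) :=
      Measure.restrict_mono_set μ subset_union_left
    exact distributionFunction_restrict_mem (hN.union measurableSet_Iic) (hγN ▸ hle)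
      (hρμ.trans hle.absolutelyContinuous)
  refine hκ (eq_zero_of_countable_range_of_measure_Ioo (f := σ)
    (hcount.mono (range_subset_iff.2 hσ)) fun a b _ hab => ?_)
  have hμ0 : μ (Ioc a b \ N) = 0 := measure_Ioc_sdiff_eq_zero_of_restrict_union_Iic_eq hN
    (distributionFunction.measure_eq_of_eq hab)
  have hκ0 : κ (Ioc a b) = 0 := by
    rw [← measure_sdiff_null hκN]
    exact hκμ.absolutelyContinuous hμ0
  exact measure_mono_null Ioo_subset_Ioc_self hκ0

end Uncountable

/-- Let `s : ℝ → ℝ` be strictly increasing, continuous, `s(0) = 0`, with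
Stieltjes measure `μ = g·λ + κ`, `κ ⊥ λ`, `κ ≠ 0`, and `λ ≪ μ`. The set of strictly
increasing continuous `σ` with `σ(0) = 0` whose Stieltjes measure `ν` satisfies
`g·λ ≤ ν ≤ μ`, `ν ≪ μ` with `dν/dμ ∈ {0,1}` μ-a.e., and `λ ≪ ν`, is uncountable. -/
theorem stmt15 (s : ℝ → ℝ) (hmono : StrictMono s) (hcont : Continuous s) (hs0 : s 0 = 0)
    (μ : Measure ℝ)
    (hμ : ∀ x y : ℝ, x ≤ y → μ (Set.Ioc x y) = ENNReal.ofReal (s y - s x))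
    (g : ℝ → ℝ) (hg0 : ∀ x, 0 ≤ g x) (hgloc : LocallyIntegrable g volume)
    (κ : Measure ℝ)
    (hdecomp : μ = volume.withDensity (fun x => ENNReal.ofReal (g x)) + κ)
    (hsing : κ.MutuallySingular volume) (hκ : κ ≠ 0)
    (habs : volume ≪ μ) :
    ¬ Set.Countable {σ : ℝ → ℝ | StrictMono σ ∧ Continuous σ ∧ σ 0 = 0 ∧
      ∃ ν : Measure ℝ,
        (∀ x y : ℝ, x ≤ y → ν (Set.Ioc x y) = ENNReal.ofReal (σ y - σ x)) ∧
        volume.withDensity (fun x => ENNReal.ofReal (g x)) ≤ ν ∧ ν ≤ μ ∧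
        ν ≪ μ ∧ (∀ᵐ x ∂μ, ν.rnDeriv μ x = 0 ∨ ν.rnDeriv μ x = 1) ∧
        volume ≪ ν} := by
  have := isLocallyFiniteMeasure_of_measure_Ioc hμ
  have := nullSingletonClass_of_measure_Ioc hcont hμ
  exact stmt15_general hdecomp (withDensity_absolutelyContinuous _ _) hsing hκ habs
end

section
/- For γ > 0 define ρ(x) := (γ/(2π)) · exp(−2γ‖x‖)/‖x‖² for x ∈ ℝ³ ∖ {0}. Then for every smooth function u : ℝ³ → ℝ with compact support contained in ℝ³ ∖ {0} and each i ∈ {1,2,3}, (1/2) ∫_{ℝ³} ∂u/∂x_i(x) ρ(x) dx = ∫_{ℝ³} u(x) · ((γ‖x‖ + 1) x_i / ‖x‖²) · ρ(x) dx. -/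
open MeasureTheory Set

/-!
Integrating by parts moves the derivative from `u` onto `ρ`; there is no boundary term, since `u`
vanishes near infinity and near the singularity of `ρ`. As `ρ` is radial with profile proportional
to `exp(−2γr)/r²`, whose logarithmic derivative is `−2γ − 2/r`, we have
`∇ρ(x) = −2 (γ‖x‖ + 1) ρ(x) x / ‖x‖²`, and the factor `−2` accounts for the `1/2`.
-/

section IntegrationByParts

variable {E 𝕜 G : Type*} [MeasurableSpace E] [NormedField 𝕜] [NormedAddCommGroup G]
  [NormedSpace 𝕜 G]

theorem integrable_smul_of_continuousAt_tsupport [TopologicalSpace E] [OpensMeasurableSpace E]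
    {μ : Measure E} [IsFiniteMeasureOnCompacts μ] {f : E → 𝕜} {g : E → G}
    (hf : ∀ x ∈ tsupport g, ContinuousAt f x) (hg : Continuous g) (hc : HasCompactSupport g) :
    Integrable (fun x ↦ f x • g x) μ :=
  Continuous.integrable_of_hasCompactSupport
    (continuous_of_tsupport fun x hx ↦
      (hf x (tsupport_smul_subset_right f g hx)).smul hg.continuousAt)
    hc.smul_left

theorem integral_smul_fderiv_eq_neg_fderiv_smul_of_hasCompactSupport [NormedAlgebra ℝ 𝕜]
    [NormedSpace ℝ G] [IsScalarTower ℝ 𝕜 G] [NormedAddCommGroup E] [NormedSpace ℝ E]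
    [FiniteDimensional ℝ E] [BorelSpace E] {μ : Measure E} [μ.IsAddHaarMeasure]
    {f : E → 𝕜} {g : E → G} (hf : ∀ x ∈ tsupport g, ContDiffAt ℝ 1 f x) (hg : ContDiff ℝ 1 g)
    (hc : HasCompactSupport g) (v : E) :
    ∫ x, f x • fderiv ℝ g x v ∂μ = -∫ x, fderiv ℝ f x v • g x ∂μ := by
  have hf' : ∀ x ∈ tsupport g, ContinuousAt (fun y ↦ fderiv ℝ f y v) x := fun x hx ↦
    ((hf x hx).continuousAt_fderiv one_ne_zero).clm_apply continuousAt_const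
  have hg' : Continuous fun x ↦ fderiv ℝ g x v :=
    (hg.continuous_fderiv one_ne_zero).clm_apply continuous_const
  exact integral_smul_fderiv_eq_neg_fderiv_smul_of_integrable
    (integrable_smul_of_continuousAt_tsupport hf' hg.continuous hc)
    (integrable_smul_of_continuousAt_tsupport
      (fun x hx ↦ (hf x (tsupport_fderiv_apply_subset ℝ v hx)).continuousAt) hg'
      (hc.fderiv_apply ℝ v))
    (integrable_smul_of_continuousAt_tsupport (fun x hx ↦ (hf x hx).continuousAt)
      hg.continuous hc)
    (fun x hx ↦ (hf x hx).differentiableAt one_ne_zero)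
    (fun x _ ↦ hg.differentiable one_ne_zero x)

end IntegrationByParts

theorem hasDerivAt_exp_mul_div_pow (a : ℝ) (n : ℕ) {r : ℝ} (hr : r ≠ 0) :
    HasDerivAt (fun s ↦ Real.exp (a * s) / s ^ n)
      ((a - n / r) * (Real.exp (a * r) / r ^ n)) r := by
  have hexp : HasDerivAt (fun s ↦ Real.exp (a * s)) (Real.exp (a * r) * a) r := by
    simpa using ((hasDerivAt_id r).const_mul a).exp
  refine (hexp.div (hasDerivAt_pow n r) (pow_ne_zero n hr)).congr_deriv ?_
  cases n with
  | zero => simp [mul_comm]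
  | succ n =>
    rw [Nat.add_sub_cancel]
    field_simp
    ring

section Density

variable {E : Type*} [NormedAddCommGroup E] [InnerProductSpace ℝ E]

theorem hasFDerivAt_norm {x : E} (hx : x ≠ 0) :
    HasFDerivAt (fun y : E ↦ ‖y‖) (‖x‖⁻¹ • innerSL ℝ x) x := by
  have hsq : HasFDerivAt (fun y : E ↦ ‖y‖ ^ 2) (2 • innerSL ℝ x) x :=
    (hasStrictFDerivAt_norm_sq x).hasFDerivAt
  have hsqrt := hsq.sqrt (pow_ne_zero 2 (norm_ne_zero_iff.mpr hx))
  simp only [Real.sqrt_sq, norm_nonneg] at hsqrt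
  exact hsqrt.congr_fderiv (by module)

/-- The density `ρ(x) = (γ / (2π)) exp(−2γ‖x‖) / ‖x‖²`, a multiple of the squared Yukawa potential
`exp(−γ‖x‖) / ‖x‖`. It is defined on any inner product space; the constant normalizes it to a
probability density on `ℝ³` when `γ > 0`. Its value at the origin is the junk value `0`. -/
noncomputable def yukawaDensity (γ : ℝ) (x : E) : ℝ :=
  γ / (2 * Real.pi) * (Real.exp (-2 * γ * ‖x‖) / ‖x‖ ^ 2)

theorem contDiffAt_yukawaDensity (γ : ℝ) {n : WithTop ℕ∞} {x : E} (hx : x ≠ 0) :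
    ContDiffAt ℝ n (yukawaDensity γ) x := by
  have hnorm : ContDiffAt ℝ n (fun y : E ↦ ‖y‖) x := contDiffAt_norm ℝ hx
  exact contDiffAt_const.mul
    ((contDiffAt_const.mul hnorm).exp.div (hnorm.pow 2) (pow_ne_zero 2 (norm_ne_zero_iff.mpr hx)))

theorem fderiv_yukawaDensity (γ : ℝ) {x : E} (hx : x ≠ 0) :
    fderiv ℝ (yukawaDensity γ) x =
      (-2 * ((γ * ‖x‖ + 1) / ‖x‖ ^ 2 * yukawaDensity γ x)) • innerSL ℝ x := by
  have hx' : ‖x‖ ≠ 0 := norm_ne_zero_iff.mpr hx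
  have hprofile := (hasDerivAt_exp_mul_div_pow (-2 * γ) 2 hx').const_mul (γ / (2 * Real.pi))
  refine (hprofile.comp_hasFDerivAt x (hasFDerivAt_norm hx)).fderiv.trans ?_
  rw [smul_smul, yukawaDensity]
  congr 1
  push_cast
  field_simp
  ring

end Density

theorem stmt18_general {E F : Type*} [NormedAddCommGroup E] [InnerProductSpace ℝ E]
    [FiniteDimensional ℝ E] [MeasurableSpace E] [BorelSpace E] {μ : Measure E}
    [μ.IsAddHaarMeasure] [NormedAddCommGroup F] [NormedSpace ℝ F] (γ : ℝ) {u : E → F}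
    (hu : ContDiff ℝ 1 u) (hc : HasCompactSupport u) (hsupp : 0 ∉ tsupport u) (v : E) :
    (1 / 2 : ℝ) • ∫ x, yukawaDensity γ x • fderiv ℝ u x v ∂μ =
      ∫ x, ((γ * ‖x‖ + 1) * inner ℝ x v / ‖x‖ ^ 2 * yukawaDensity γ x) • u x ∂μ := by
  have hne {x : E} (hx : x ∈ tsupport u) : x ≠ 0 := ne_of_mem_of_not_mem hx hsupp
  have hderiv (x : E) : fderiv ℝ (yukawaDensity γ) x v • u x =
      (-2 : ℝ) • ((γ * ‖x‖ + 1) * inner ℝ x v / ‖x‖ ^ 2 * yukawaDensity γ x) • u x := by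
    by_cases hx : x ∈ tsupport u
    · rw [fderiv_yukawaDensity γ (hne hx), smul_smul, smul_apply, innerSL_apply_apply, smul_eq_mul]
      congr 1
      ring
    · simp [image_eq_zero_of_notMem_tsupport hx]
  rw [integral_smul_fderiv_eq_neg_fderiv_smul_of_hasCompactSupport
    (fun x hx ↦ contDiffAt_yukawaDensity γ (hne hx)) hu hc v]
  simp only [hderiv, integral_smul]
  module

/-- For `γ > 0` and `ρ(x) = (γ/(2π)) exp(−2γ‖x‖)/‖x‖²` on `ℝ³ ∖ {0}`, every
smooth `u` with compact support in `ℝ³ ∖ {0}` satisfies, for each coordinate `i`,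
`(1/2) ∫ ∂u/∂xᵢ(x) ρ(x) dx = ∫ u(x) ((γ‖x‖+1) xᵢ/‖x‖²) ρ(x) dx`. -/
theorem stmt18 (γ : ℝ) (hγ : 0 < γ)
    (u : EuclideanSpace ℝ (Fin 3) → ℝ) (hu : ContDiff ℝ (⊤ : ℕ∞) u)
    (hc : HasCompactSupport u)
    (hsupp : tsupport u ⊆ ({0}ᶜ : Set (EuclideanSpace ℝ (Fin 3)))) (i : Fin 3) :
    (1 / 2) * ∫ x : EuclideanSpace ℝ (Fin 3),
        fderiv ℝ u x (EuclideanSpace.single i 1) *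
          (γ / (2 * Real.pi) * (Real.exp (-2 * γ * ‖x‖) / ‖x‖ ^ 2)) =
      ∫ x : EuclideanSpace ℝ (Fin 3),
        u x * ((γ * ‖x‖ + 1) * x i / ‖x‖ ^ 2) *
          (γ / (2 * Real.pi) * (Real.exp (-2 * γ * ‖x‖) / ‖x‖ ^ 2)) := by
  simpa [yukawaDensity, EuclideanSpace.inner_single_right, mul_comm, mul_left_comm, mul_assoc]
    using stmt18_general (μ := volume) γ (hu.of_le (by simp)) hc (hsupp · rfl)
      (EuclideanSpace.single i 1)
end
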